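/- For all f, g ∈ K: (f,g) ∈ θ̄ if and only if (f,g) ∈ θ or {f,g} ⊆ {β⁰(Q), β¹(Q), β²(Q)} for some Q ∈ Cfg⋆. (Lemma 4.3(2).) -/

import Mathlib

namespace Paper

/-- Direction of a Turing-machine head move. -/
inductive Dir : Type
  | L | R
deriving DecidableEq

/-- A Turing machine with states μ₀, μ₁, …, μ_k (μ₀ the halting state): for each state
μ_i with 1 ≤ i ≤ k and each tape symbol r, exactly one instruction μ_i r s D μ_m,
recorded as `instr i r = (s, D, m)`.  (The value of `instr` at `i = 0` is irrelevant:
no instruction begins with μ₀.) -/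
structure TM (k : ℕ) : Type where
  instr : Fin (k + 1) → Bool → Bool × Dir × Fin (k + 1)

/-- The universe of the algebra B(T):
`zero` = 0, `P j` = P_j, `one`,`two`,`H` the sequential elements U, and the machine
elements `C b i r s` = C_{ir}^s, `D b i r s` = D_{ir}^s, `M b i r` = M_i^r, where
`b = true` marks the barred copy V̄. -/
inductive BT (k : ℕ) : Type
  | zero : BT k
  | P : Fin 3 → BT k
  | one : BT k
  | two : BT k
  | H : BT k
  | C : Bool → Fin (k + 1) → Bool → Bool → BT k
  | D : Bool → Fin (k + 1) → Bool → Bool → BT k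
  | M : Bool → Fin (k + 1) → Bool → BT k
deriving DecidableEq

namespace BT

variable {k : ℕ}

/-- The partial order of B(T): x ≤ y iff x = 0, or x = y, or (x = P₂ and y ∈ {P₀,P₁}). -/
def le (x y : BT k) : Prop :=
  x = zero ∨ x = y ∨ (x = P 2 ∧ (y = P 0 ∨ y = P 1))

/-- x ∧ y: the greatest lower bound for `le`. -/
def meet (x y : BT k) : BT k :=
  if x = y then x
  else if x = P 2 ∧ (y = P 0 ∨ y = P 1) then P 2
  else if y = P 2 ∧ (x = P 0 ∨ x = P 1) then P 2
  else if (x = P 0 ∨ x = P 1) ∧ (y = P 0 ∨ y = P 1) then P 2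
  else zero

/-- membership in P = {P₀,P₁,P₂} -/
def isP : BT k → Bool
  | P _ => true
  | _ => false

/-- membership in U = {1,2,H} -/
def isU : BT k → Bool
  | one => true
  | two => true
  | H => true
  | _ => false

/-- membership in V ∪ V̄ -/
def isVV : BT k → Bool
  | C _ _ _ _ => true
  | D _ _ _ _ => true
  | M _ _ _ => true
  | _ => false

/-- membership in U ∪ V ∪ V̄ -/
def isUVV (x : BT k) : Bool := isU x || isVV x

/-- membership in V₀ = {C_{0r}^s, D_{0r}^s, M₀^r} (unbarred, state μ₀) -/
def isV0 : BT k → Bool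
  | C false i _ _ => i == 0
  | D false i _ _ => i == 0
  | M false i _ => i == 0
  | _ => false

/-- membership in V₁₀⁰ = {C₁₀⁰, M₁⁰, D₁₀⁰} -/
def isV10 (x : BT k) : Bool :=
  x == C false 1 false false || x == M false 1 false || x == D false 1 false false

/-- the bar involution on V ∪ V̄ (identity elsewhere) -/
def barOp : BT k → BT k
  | C b i r s => C (!b) i r s
  | D b i r s => D (!b) i r s
  | M b i r => M (!b) i r
  | x => x

/-- s₀ = C₁₀⁰, s₁ = M₁⁰, s₂ = D₁₀⁰ -/
def sel : Fin 3 → BT k := ![C false 1 false false, M false 1 false, D false 1 false false]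

/-- x ∧ⁱ y = x if x = y ∈ (P ∪ V₁₀⁰) \ {s_i}, else 0. -/
def meetI (i : Fin 3) (x y : BT k) : BT k :=
  if x = y ∧ (isP x ∨ isV10 x) ∧ x ≠ sel i then x else zero

/-- T₀(x) = P₂ if x ∈ {P₀,P₂}; P₀ if x = P₁; x if x ∈ V₀; else 0. -/
def T0 : BT k → BT k
  | P j => if j = 1 then P 0 else P 2
  | C false i r s => if i = 0 then C false i r s else zero
  | D false i r s => if i = 0 then D false i r s else zero
  | M false i r => if i = 0 then M false i r else zero
  | _ => zero

/-- T₁(x,y). -/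
def T1 (x y : BT k) : BT k :=
  if (x = P 0 ∧ y = P 0) ∨ (x = P 0 ∧ y = P 1) ∨ (x = P 1 ∧ y = P 0) ∨
     (x = P 0 ∧ y = P 2) ∨ (x = P 2 ∧ y = P 0) then P 1
  else if (x = P 1 ∨ x = P 2) ∧ (y = P 1 ∨ y = P 2) then P 2
  else if x = y ∧ isV10 x then x
  else zero

/-- J′(x,y,z) = x ∧ z if x = y or {x,y} ⊆ P; x if x = ȳ ∈ V ∪ V̄; else 0. -/
def J' (x y z : BT k) : BT k :=
  if x = y ∨ (isP x ∧ isP y) then meet x z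
  else if isVV y ∧ x = barOp y then x
  else zero

/-- the ternary discriminator: t(x,y,z) = z if x = y, else x. -/
def disc (x y z : BT k) : BT k := if x = y then z else x

/-- S₁(u,x,y,z). -/
def S1 (u x y z : BT k) : BT k :=
  if (u = one ∨ u = two) ∧ x = y ∧ y = z ∧ isUVV x then x
  else if isP x ∧ isP y ∧ isP z then disc x y z
  else zero

/-- S₂(u,v,x,y,z). -/
def S2 (u v x y z : BT k) : BT k :=
  if isVV v ∧ u = barOp v ∧ x = y ∧ y = z ∧ isVV x then x
  else if isP x ∧ isP y ∧ isP z then disc x y z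
  else zero

/-- L_{irt} for the instruction μ_i r s L μ_m (the barred clause is handled by carrying
the bar `b` of the argument through). -/
def Lop (i : Fin (k + 1)) (r s : Bool) (m : Fin (k + 1)) (t : Bool) :
    BT k → BT k → BT k → BT k := fun x y u =>
  match u with
  | P j => if x = one ∧ y = one then P j else zero
  | C b i' r' s' =>
      if x = one ∧ y = one ∧ i' = i ∧ r' = r then C b m t s'
      else if x = H ∧ y = one ∧ i' = i ∧ r' = r ∧ s' = t then M b m t
      else zero
  | M b i' r' => if x = two ∧ y = H ∧ i' = i ∧ r' = r then D b m t s else zero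
  | D b i' r' s' => if x = two ∧ y = two ∧ i' = i ∧ r' = r then D b m t s' else zero
  | _ => zero

/-- R_{irt} for the instruction μ_i r s R μ_m. -/
def Rop (i : Fin (k + 1)) (r s : Bool) (m : Fin (k + 1)) (t : Bool) :
    BT k → BT k → BT k → BT k := fun x y u =>
  match u with
  | P j => if x = one ∧ y = one then P j else zero
  | C b i' r' s' => if x = one ∧ y = one ∧ i' = i ∧ r' = r then C b m t s' else zero
  | M b i' r' => if x = H ∧ y = one ∧ i' = i ∧ r' = r then C b m t s else zero
  | D b i' r' s' =>
      if x = two ∧ y = H ∧ i' = i ∧ r' = r ∧ s' = t then M b m t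
      else if x = two ∧ y = two ∧ i' = i ∧ r' = r then D b m t s'
      else zero
  | _ => zero

end BT

/-- The forward machine operation determined by the unique instruction of T beginning
with μ_i r (for 1 ≤ i ≤ k) and the symbol t. -/
def fwd {k : ℕ} (T : TM k) (i : Fin (k + 1)) (r t : Bool) :
    BT k → BT k → BT k → BT k :=
  match T.instr i r with
  | (s, Dir.L, m) => BT.Lop i r s m t
  | (s, Dir.R, m) => BT.Rop i r s m t

/-- the reverse of a machine operation: F°(x,y,u) = v when F(x,y,v) = u ≠ 0, else 0. -/
noncomputable def revOp {k : ℕ} (F : BT k → BT k → BT k → BT k) (x y u : BT k) : BT k :=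
  haveI := Classical.propDecidable (u ≠ BT.zero ∧ ∃ v, F x y v = u)
  if h : u ≠ BT.zero ∧ ∃ v, F x y v = u then h.2.choose else BT.zero

/-- The machine operations ℳ: `b = false` gives the forward operation, `b = true` the
reverse operation. -/
noncomputable def mop {k : ℕ} (T : TM k) (i : Fin (k + 1)) (r t : Bool) (b : Bool) :
    BT k → BT k → BT k → BT k :=
  match b with
  | false => fwd T i r t
  | true => revOp (fwd T i r t)

/-- The relation ≺ on U: 2≺2, 2≺H, H≺1, 1≺1. -/
def prec {k : ℕ} : BT k → BT k → Bool
  | BT.two, BT.two => true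
  | BT.two, BT.H => true
  | BT.H, BT.one => true
  | BT.one, BT.one => true
  | _, _ => false

/-- U_i¹ built from the machine operation F. -/
def U1op {k : ℕ} (F : BT k → BT k → BT k → BT k) (x y z u : BT k) : BT k :=
  if prec x y ∧ prec x z ∧ y ≠ z ∧ BT.isVV (F x y u) then BT.barOp (F x y u)
  else if prec x y ∧ y = z then F x y u
  else BT.zero

/-- U_i² built from the machine operation F. -/
def U2op {k : ℕ} (F : BT k → BT k → BT k → BT k) (x y z u : BT k) : BT k :=
  if prec x z ∧ prec y z ∧ x ≠ y ∧ BT.isVV (F y z u) then BT.barOp (F y z u)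
  else if x = y ∧ prec y z then F y z u
  else BT.zero

/-- The n-ary polynomials of the algebra B(T): functions obtained by composing the basic
operations (the constant 0, T₀, T₁, ∧, ∧⁰, ∧¹, ∧², J′, S₁, S₂, the forward and reverse
machine operations, and the U_i¹, U_i²), coordinate projections and constants. -/
inductive PolyB {k : ℕ} (T : TM k) : {n : ℕ} → ((Fin n → BT k) → BT k) → Prop where
  | proj {n : ℕ} (i : Fin n) : PolyB T fun v => v i
  | const {n : ℕ} (c : BT k) : PolyB T fun _ : Fin n → BT k => c
  | t0 {n : ℕ} {p : (Fin n → BT k) → BT k} :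
      PolyB T p → PolyB T fun v => BT.T0 (p v)
  | t1 {n : ℕ} {p q : (Fin n → BT k) → BT k} :
      PolyB T p → PolyB T q → PolyB T fun v => BT.T1 (p v) (q v)
  | meet {n : ℕ} {p q : (Fin n → BT k) → BT k} :
      PolyB T p → PolyB T q → PolyB T fun v => BT.meet (p v) (q v)
  | meetI (j : Fin 3) {n : ℕ} {p q : (Fin n → BT k) → BT k} :
      PolyB T p → PolyB T q → PolyB T fun v => BT.meetI j (p v) (q v)
  | jop {n : ℕ} {p q r : (Fin n → BT k) → BT k} :
      PolyB T p → PolyB T q → PolyB T r → PolyB T fun v => BT.J' (p v) (q v) (r v)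
  | s1 {n : ℕ} {p q r s : (Fin n → BT k) → BT k} :
      PolyB T p → PolyB T q → PolyB T r → PolyB T s →
      PolyB T fun v => BT.S1 (p v) (q v) (r v) (s v)
  | s2 {n : ℕ} {p q r s w : (Fin n → BT k) → BT k} :
      PolyB T p → PolyB T q → PolyB T r → PolyB T s → PolyB T w →
      PolyB T fun v => BT.S2 (p v) (q v) (r v) (s v) (w v)
  | mach (i : Fin (k + 1)) (hi : i ≠ 0) (r t b : Bool) {n : ℕ}
      {p q u : (Fin n → BT k) → BT k} :
      PolyB T p → PolyB T q → PolyB T u →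
      PolyB T fun v => mop T i r t b (p v) (q v) (u v)
  | u1 (i : Fin (k + 1)) (hi : i ≠ 0) (r t b : Bool) {n : ℕ}
      {p q r' s : (Fin n → BT k) → BT k} :
      PolyB T p → PolyB T q → PolyB T r' → PolyB T s →
      PolyB T fun v => U1op (mop T i r t b) (p v) (q v) (r' v) (s v)
  | u2 (i : Fin (k + 1)) (hi : i ≠ 0) (r t b : Bool) {n : ℕ}
      {p q r' s : (Fin n → BT k) → BT k} :
      PolyB T p → PolyB T q → PolyB T r' → PolyB T s →
      PolyB T fun v => U2op (mop T i r t b) (p v) (q v) (r' v) (s v)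

/-- unary polynomials of B(T) -/
def UPolyB {k : ℕ} (T : TM k) (F : BT k → BT k) : Prop :=
  PolyB T (n := 1) fun v => F (v 0)

/-- binary polynomials of B(T) -/
def BPolyB {k : ℕ} (T : TM k) (F : BT k → BT k → BT k) : Prop :=
  PolyB T (n := 2) fun v => F (v 0) (v 1)

/-- A Turing machine configuration ⟨tape, head position, state⟩. -/
structure Cfg (k : ℕ) : Type where
  tape : ℤ → Bool
  pos : ℤ
  state : Fin (k + 1)

/-- One computation step of T (halted configurations, in state μ₀, are fixed). -/
def cfgStep {k : ℕ} (T : TM k) (c : Cfg k) : Cfg k :=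
  if c.state = 0 then c
  else
    match T.instr c.state (c.tape c.pos) with
    | (s, Dir.L, m) => ⟨Function.update c.tape c.pos s, c.pos - 1, m⟩
    | (s, Dir.R, m) => ⟨Function.update c.tape c.pos s, c.pos + 1, m⟩

/-- The initial configuration Q₀ = ⟨t₀, 0, μ₁⟩, t₀ the all-zero tape. -/
def Q0 (k : ℕ) : Cfg k := ⟨fun _ => false, 0, 1⟩

/-- N = {n₀,…,n_m} ∪ {−1,0,1}: the squares visited during the halting computation
Q₀, …, Q_m, together with −1, 0, 1. -/
def Nset {k : ℕ} (T : TM k) (m : ℕ) : Finset ℤ :=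
  ((Finset.range (m + 1)).image fun j => ((cfgStep T)^[j] (Q0 k)).pos) ∪ {-1, 0, 1}

/-- The universe of the direct power A = B(T)^Y, where Y = {s₀} ∪ N: the coordinate
`none` is the extra coordinate s₀ ∉ N, and `some x` the coordinate x ∈ N. -/
abbrev AA {k : ℕ} (T : TM k) (m : ℕ) : Type := Option {x : ℤ // x ∈ Nset T m} → BT k

/-- The sequential generator a_n (n ∈ N). -/
def aEl {k : ℕ} (T : TM k) (m : ℕ) (n : ℤ) : AA T m := fun y =>
  match y with
  | none => BT.one
  | some x => if x.1 < n then BT.one else if x.1 = n then BT.H else BT.two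

/-- The generator q^j (j ∈ {0,1,2}). -/
def qEl {k : ℕ} (T : TM k) (m : ℕ) (j : Fin 3) : AA T m := fun y =>
  match y with
  | none => BT.P j
  | some x =>
      if x.1 < 0 then BT.C false 1 false false
      else if x.1 = 0 then BT.M false 1 false
      else BT.D false 1 false false

/-- K: the subalgebra of A = B(T)^Y generated by S ∪ {q⁰,q¹,q²}
(operations computed coordinatewise). -/
inductive InK {k : ℕ} (T : TM k) (m : ℕ) : AA T m → Prop where
  | gen_a (n : ℤ) (hn : n ∈ Nset T m) : InK T m (aEl T m n)
  | gen_q (j : Fin 3) : InK T m (qEl T m j)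
  | zeroOp : InK T m fun _ => BT.zero
  | t0 {f : AA T m} : InK T m f → InK T m fun y => BT.T0 (f y)
  | t1 {f g : AA T m} : InK T m f → InK T m g → InK T m fun y => BT.T1 (f y) (g y)
  | meet {f g : AA T m} : InK T m f → InK T m g → InK T m fun y => BT.meet (f y) (g y)
  | meetI (j : Fin 3) {f g : AA T m} :
      InK T m f → InK T m g → InK T m fun y => BT.meetI j (f y) (g y)
  | jop {f g h : AA T m} : InK T m f → InK T m g → InK T m h →
      InK T m fun y => BT.J' (f y) (g y) (h y)
  | s1 {f g h p : AA T m} : InK T m f → InK T m g → InK T m h → InK T m p →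
      InK T m fun y => BT.S1 (f y) (g y) (h y) (p y)
  | s2 {f g h p q : AA T m} : InK T m f → InK T m g → InK T m h → InK T m p → InK T m q →
      InK T m fun y => BT.S2 (f y) (g y) (h y) (p y) (q y)
  | mach (i : Fin (k + 1)) (hi : i ≠ 0) (r t b : Bool) {f g h : AA T m} :
      InK T m f → InK T m g → InK T m h →
      InK T m fun y => mop T i r t b (f y) (g y) (h y)
  | u1 (i : Fin (k + 1)) (hi : i ≠ 0) (r t b : Bool) {f g h p : AA T m} :
      InK T m f → InK T m g → InK T m h → InK T m p →
      InK T m fun y => U1op (mop T i r t b) (f y) (g y) (h y) (p y)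
  | u2 (i : Fin (k + 1)) (hi : i ≠ 0) (r t b : Bool) {f g h p : AA T m} :
      InK T m f → InK T m g → InK T m h → InK T m p →
      InK T m fun y => U2op (mop T i r t b) (f y) (g y) (h y) (p y)

/-- The n-ary polynomials of the algebra K: compositions of the basic operations
(computed coordinatewise), coordinate projections, and constants from K. -/
inductive PolyK {k : ℕ} (T : TM k) (m : ℕ) :
    {n : ℕ} → ((Fin n → AA T m) → AA T m) → Prop where
  | proj {n : ℕ} (i : Fin n) : PolyK T m fun v => v i
  | const {n : ℕ} (c : AA T m) (hc : InK T m c) : PolyK T m fun _ : Fin n → AA T m => c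
  | zeroOp {n : ℕ} : PolyK T m fun (_ : Fin n → AA T m) _ => BT.zero
  | t0 {n : ℕ} {p : (Fin n → AA T m) → AA T m} :
      PolyK T m p → PolyK T m fun v y => BT.T0 (p v y)
  | t1 {n : ℕ} {p q : (Fin n → AA T m) → AA T m} :
      PolyK T m p → PolyK T m q → PolyK T m fun v y => BT.T1 (p v y) (q v y)
  | meet {n : ℕ} {p q : (Fin n → AA T m) → AA T m} :
      PolyK T m p → PolyK T m q → PolyK T m fun v y => BT.meet (p v y) (q v y)
  | meetI (j : Fin 3) {n : ℕ} {p q : (Fin n → AA T m) → AA T m} :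
      PolyK T m p → PolyK T m q → PolyK T m fun v y => BT.meetI j (p v y) (q v y)
  | jop {n : ℕ} {p q r : (Fin n → AA T m) → AA T m} :
      PolyK T m p → PolyK T m q → PolyK T m r →
      PolyK T m fun v y => BT.J' (p v y) (q v y) (r v y)
  | s1 {n : ℕ} {p q r s : (Fin n → AA T m) → AA T m} :
      PolyK T m p → PolyK T m q → PolyK T m r → PolyK T m s →
      PolyK T m fun v y => BT.S1 (p v y) (q v y) (r v y) (s v y)
  | s2 {n : ℕ} {p q r s w : (Fin n → AA T m) → AA T m} :
      PolyK T m p → PolyK T m q → PolyK T m r → PolyK T m s → PolyK T m w →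
      PolyK T m fun v y => BT.S2 (p v y) (q v y) (r v y) (s v y) (w v y)
  | mach (i : Fin (k + 1)) (hi : i ≠ 0) (r t b : Bool) {n : ℕ}
      {p q u : (Fin n → AA T m) → AA T m} :
      PolyK T m p → PolyK T m q → PolyK T m u →
      PolyK T m fun v y => mop T i r t b (p v y) (q v y) (u v y)
  | u1 (i : Fin (k + 1)) (hi : i ≠ 0) (r t b : Bool) {n : ℕ}
      {p q r' s : (Fin n → AA T m) → AA T m} :
      PolyK T m p → PolyK T m q → PolyK T m r' → PolyK T m s →
      PolyK T m fun v y => U1op (mop T i r t b) (p v y) (q v y) (r' v y) (s v y)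
  | u2 (i : Fin (k + 1)) (hi : i ≠ 0) (r t b : Bool) {n : ℕ}
      {p q r' s : (Fin n → AA T m) → AA T m} :
      PolyK T m p → PolyK T m q → PolyK T m r' → PolyK T m s →
      PolyK T m fun v y => U2op (mop T i r t b) (p v y) (q v y) (r' v y) (s v y)

/-- unary polynomials of K -/
def UPolyK {k : ℕ} (T : TM k) (m : ℕ) (F : AA T m → AA T m) : Prop :=
  PolyK T m (n := 1) fun v => F (v 0)

/-- binary polynomials of K -/
def BPolyK {k : ℕ} (T : TM k) (m : ℕ) (F : AA T m → AA T m → AA T m) : Prop :=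
  PolyK T m (n := 2) fun v => F (v 0) (v 1)

/-- Q ∈ Cfg⋆: T, started in configuration Q, reaches the halting configuration
Q_m in finitely many steps, the head visiting only squares in N. -/
def InCfgStar {k : ℕ} (T : TM k) (m : ℕ) (Q : Cfg k) : Prop :=
  ∃ j : ℕ, (cfgStep T)^[j] Q = (cfgStep T)^[m] (Q0 k) ∧
    ∀ l ≤ j, ((cfgStep T)^[l] Q).pos ∈ Nset T m

/-- β^j(Q): the encoding of the configuration Q (with P_j in coordinate s₀). -/
def betaEl {k : ℕ} (T : TM k) (m : ℕ) (j : Fin 3) (Q : Cfg k) : AA T m := fun y =>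
  match y with
  | none => BT.P j
  | some x =>
      if x.1 < Q.pos then BT.C false Q.state (Q.tape Q.pos) (Q.tape x.1)
      else if x.1 = Q.pos then BT.M false Q.state (Q.tape Q.pos)
      else BT.D false Q.state (Q.tape Q.pos) (Q.tape x.1)

/-- K₀ = {f ∈ K : f(x) = 0 for some x ∈ N}. -/
def K0 {k : ℕ} (T : TM k) (m : ℕ) : Set (AA T m) :=
  {f | InK T m f ∧ ∃ x : {x : ℤ // x ∈ Nset T m}, f (some x) = BT.zero}

/-- S = {a_n : n ∈ N}. -/
def Sset {k : ℕ} (T : TM k) (m : ℕ) : Set (AA T m) :=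
  {f | ∃ n ∈ Nset T m, f = aEl T m n}

/-- Λ = {β^j(Q) : Q ∈ Cfg⋆, j ∈ {0,1,2}}. -/
def Lam {k : ℕ} (T : TM k) (m : ℕ) : Set (AA T m) :=
  {f | ∃ (j : Fin 3) (Q : Cfg k), InCfgStar T m Q ∧ f = betaEl T m j Q}

/-- θ: (f,g) ∈ θ iff f, g ∈ K and for every unary polynomial F of K,
F(f) = q² ⇔ F(g) = q². -/
def theta {k : ℕ} (T : TM k) (m : ℕ) (f g : AA T m) : Prop :=
  InK T m f ∧ InK T m g ∧
    ∀ F : AA T m → AA T m, UPolyK T m F → (F f = qEl T m 2 ↔ F g = qEl T m 2)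

/-- A congruence of K: an equivalence relation on K preserved by all basic operations. -/
structure IsCongK {k : ℕ} (T : TM k) (m : ℕ) (R : AA T m → AA T m → Prop) : Prop where
  refl : ∀ f, InK T m f → R f f
  symm : ∀ {f g}, R f g → R g f
  trans : ∀ {f g h}, R f g → R g h → R f h
  dom : ∀ {f g}, R f g → InK T m f ∧ InK T m g
  t0 : ∀ {f f'}, R f f' → R (fun y => BT.T0 (f y)) (fun y => BT.T0 (f' y))
  t1 : ∀ {f f' g g'}, R f f' → R g g' →
    R (fun y => BT.T1 (f y) (g y)) (fun y => BT.T1 (f' y) (g' y))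
  meet : ∀ {f f' g g'}, R f f' → R g g' →
    R (fun y => BT.meet (f y) (g y)) (fun y => BT.meet (f' y) (g' y))
  meetI : ∀ (j : Fin 3) {f f' g g'}, R f f' → R g g' →
    R (fun y => BT.meetI j (f y) (g y)) (fun y => BT.meetI j (f' y) (g' y))
  jop : ∀ {f f' g g' h h'}, R f f' → R g g' → R h h' →
    R (fun y => BT.J' (f y) (g y) (h y)) (fun y => BT.J' (f' y) (g' y) (h' y))
  s1 : ∀ {f f' g g' h h' p p'}, R f f' → R g g' → R h h' → R p p' →
    R (fun y => BT.S1 (f y) (g y) (h y) (p y))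
      (fun y => BT.S1 (f' y) (g' y) (h' y) (p' y))
  s2 : ∀ {f f' g g' h h' p p' q q'}, R f f' → R g g' → R h h' → R p p' → R q q' →
    R (fun y => BT.S2 (f y) (g y) (h y) (p y) (q y))
      (fun y => BT.S2 (f' y) (g' y) (h' y) (p' y) (q' y))
  mach : ∀ (i : Fin (k + 1)), i ≠ 0 → ∀ (r t b : Bool) {f f' g g' h h'},
    R f f' → R g g' → R h h' →
    R (fun y => mop T i r t b (f y) (g y) (h y))
      (fun y => mop T i r t b (f' y) (g' y) (h' y))
  u1 : ∀ (i : Fin (k + 1)), i ≠ 0 → ∀ (r t b : Bool) {f f' g g' h h' p p'},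
    R f f' → R g g' → R h h' → R p p' →
    R (fun y => U1op (mop T i r t b) (f y) (g y) (h y) (p y))
      (fun y => U1op (mop T i r t b) (f' y) (g' y) (h' y) (p' y))
  u2 : ∀ (i : Fin (k + 1)), i ≠ 0 → ∀ (r t b : Bool) {f f' g g' h h' p p'},
    R f f' → R g g' → R h h' → R p p' →
    R (fun y => U2op (mop T i r t b) (f y) (g y) (h y) (p y))
      (fun y => U2op (mop T i r t b) (f' y) (g' y) (h' y) (p' y))

/-- θ̄: the smallest congruence of K containing θ ∪ {(q⁰,q²)} (the intersection of all
congruences of K containing θ and (q⁰,q²)). -/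
def thetaBar {k : ℕ} (T : TM k) (m : ℕ) (f g : AA T m) : Prop :=
  InK T m f ∧ InK T m g ∧
    ∀ R : AA T m → AA T m → Prop, IsCongK T m R → (∀ a b, theta T m a b → R a b) →
      R (qEl T m 0) (qEl T m 2) → R f g

/-!
Call a function on `Y` nonvanishing if it is nowhere `0` on `N`. Every basic operation is strict
towards `S ∪ Λ`: if its value on elements of `K` is nonvanishing, then so are all its arguments,
and the value lies in `S ∪ Λ`. For the machine operations this is because a nonvanishing value
forces two sequential arguments `a_n`, `a_{n+1}`, so that the operation performs a step of `T` (or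
undoes one). Hence `K = K₀ ∪ S ∪ Λ`, the set `K₀` lies in one `θ`-class, and two elements of
`S ∪ Λ` that agree on `N` are equal or encode the same configuration of `Cfg⋆`.

Each step of `T` within `Cfg⋆` is performed and undone by unary polynomials of `K`. Since every
`Q ∈ Cfg⋆` shares its halting configuration with `Q₀`, these polynomials carry the pair `(q⁰, q²)`
to every block `{β⁰(Q), β¹(Q), β²(Q)}`, which gives one inclusion. They also show that each block is
a union of `θ`-classes, as this holds for `Q₀`. So `θ` together with the blocks is an equivalence
relation. It is a congruence, because the `j` in `β^j(Q)` affects only the coordinate `s₀`: the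
images of two elements of a block under a unary polynomial agree on `N`.
-/

section Algebra

variable {k : ℕ}

namespace BT

variable {x y z u v : BT k}

/-- Equality up to exchanging elements of `P`: the condition in the first clause of `J′`. -/
def PEq (x y : BT k) : Prop := x = y ∨ (isP x ∧ isP y)

lemma PEq.symm (h : PEq x y) : PEq y x :=
  h.imp Eq.symm And.symm

lemma PEq.isP_eq (h : PEq x y) : isP x = isP y := by
  rcases h with rfl | ⟨hx, hy⟩
  exacts [rfl, hx.trans hy.symm]

lemma PEq.eq_of_isP_eq_false (h : PEq x y) (hx : isP x = false) : x = y :=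
  h.resolve_right (by simp [hx])

lemma ne_zero_of_isP (h : isP x) : x ≠ zero := by
  rintro rfl; simp [isP] at h

lemma ne_zero_of_isU (h : isU x) : x ≠ zero := by
  rintro rfl; simp [isU] at h

lemma ne_zero_of_isVV (h : isVV x) : x ≠ zero := by
  rintro rfl; simp [isVV] at h

lemma not_isU_of_isVV (h : isVV x) : ¬ isU x := by
  cases x <;> simp_all [isVV, isU]

lemma not_isP_of_isVV (h : isVV x) : isP x = false := by
  cases x <;> simp_all [isVV, isP]

lemma isVV_of_isV10 (h : isV10 x) : isVV x := by
  cases x <;> simp_all [isV10, isVV]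

lemma exists_eq_P_of_isP (h : isP x) : ∃ j, x = P j := by
  cases x <;> simp_all [isP]

lemma PEq.ne_zero (h : PEq x y) (hx : x ≠ zero) : y ≠ zero := by
  rcases h with rfl | ⟨-, hy⟩
  exacts [hx, ne_zero_of_isP hy]

@[simp] lemma isP_barOp (x : BT k) : isP (barOp x) = isP x := by
  cases x <;> rfl

@[simp] lemma isVV_barOp (x : BT k) : isVV (barOp x) = isVV x := by
  cases x <;> rfl

lemma isU_of_prec (h : prec x y) : isU x ∧ isU y := by
  cases x <;> cases y <;> simp_all [prec, isU]

lemma pEq_of_T0_ne_zero (h : T0 x ≠ zero) : PEq (T0 x) x ∧ (isP x ∨ isVV x) := by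
  unfold T0 at h ⊢
  unfold PEq
  grind [isP, isVV]

lemma isP_T0 (h : isP x) : isP (T0 x) := by
  obtain ⟨j, rfl⟩ := exists_eq_P_of_isP h
  fin_cases j <;> rfl

lemma pEq_of_meet_ne_zero (h : meet x y ≠ zero) : PEq x y := by
  unfold meet at h
  unfold PEq
  split_ifs at h <;> grind [isP]

lemma PEq.meet_left (h : PEq x y) : PEq (meet x y) x := by
  rcases h with rfl | ⟨hx, hy⟩
  · simp [meet, PEq]
  · obtain ⟨i, rfl⟩ := exists_eq_P_of_isP hx
    obtain ⟨j, rfl⟩ := exists_eq_P_of_isP hy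
    fin_cases i <;> fin_cases j <;> simp [meet, PEq, isP]

lemma pEq_of_T1_ne_zero (h : T1 x y ≠ zero) : PEq x y ∧ (isP x ∨ isV10 x) := by
  unfold T1 at h
  unfold PEq
  split_ifs at h <;> grind [isP]

lemma PEq.T1_left (h : PEq x y) (hx : isP x ∨ isV10 x) : PEq (T1 x y) x := by
  rcases hx with hx | hx
  · obtain ⟨i, rfl⟩ := exists_eq_P_of_isP hx
    obtain ⟨j, rfl⟩ := exists_eq_P_of_isP (h.isP_eq ▸ hx)
    fin_cases i <;> fin_cases j <;> simp [T1, PEq, isP]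
  · obtain rfl := h.eq_of_isP_eq_false (not_isP_of_isVV (isVV_of_isV10 hx))
    cases x <;> simp_all [T1, PEq, isV10]

lemma eq_of_meetI_ne_zero {i : Fin 3} (h : meetI i x y ≠ zero) :
    meetI i x y = x ∧ (isP x ∨ isV10 x) ∧ x ≠ sel i := by
  unfold meetI at h ⊢
  grind

lemma PEq.J'_eq_meet (h : PEq x y) : J' x y z = meet x z :=
  if_pos h

lemma J'_eq_of_not_pEq (h : ¬ PEq x y) (hne : J' x y z ≠ zero) :
    J' x y z = x ∧ isVV y ∧ x = barOp y := by
  unfold J' at hne ⊢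
  grind [PEq]

lemma pEq_or_eq_barOp_of_J'_ne_zero (h : J' x y z ≠ zero) :
    (PEq x y ∧ PEq x z) ∨ (isVV y ∧ x = barOp y) := by
  by_cases hxy : PEq x y
  · exact Or.inl ⟨hxy, pEq_of_meet_ne_zero (hxy.J'_eq_meet ▸ h)⟩
  · exact Or.inr (J'_eq_of_not_pEq hxy h).2

lemma ne_zero_of_J'_ne_zero (h : J' x y z ≠ zero) : x ≠ zero := by
  by_cases hxy : PEq x y
  · rw [hxy.J'_eq_meet] at h
    exact (pEq_of_meet_ne_zero h).meet_left.ne_zero h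
  · rwa [(J'_eq_of_not_pEq hxy h).1] at h

lemma isP_J' (h : J' x y z ≠ zero) : isP (J' x y z) = isP x := by
  by_cases hxy : PEq x y
  · rw [hxy.J'_eq_meet] at h ⊢
    exact (pEq_of_meet_ne_zero h).meet_left.isP_eq
  · rw [(J'_eq_of_not_pEq hxy h).1]

lemma pEq_of_S1_ne_zero (h : S1 u x y z ≠ zero) :
    PEq (S1 u x y z) x ∧ (u = one ∨ u = two ∨ isP x) := by
  unfold S1 disc at h ⊢
  unfold PEq
  grind

lemma pEq_of_S2_ne_zero (h : S2 u v x y z ≠ zero) :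
    PEq (S2 u v x y z) x ∧ ((isVV v ∧ u = barOp v) ∨ isP x) := by
  unfold S2 disc at h ⊢
  unfold PEq
  grind

lemma Lop_ne_zero {i m : Fin (k + 1)} {r s t : Bool} (h : Lop i r s m t x y u ≠ zero) :
    prec x y ∧ ((isP u ∧ isP (Lop i r s m t x y u)) ∨ (isVV u ∧ isVV (Lop i r s m t x y u))) := by
  unfold Lop at h ⊢
  cases u <;> grind [prec, isP, isVV]

lemma Rop_ne_zero {i m : Fin (k + 1)} {r s t : Bool} (h : Rop i r s m t x y u ≠ zero) :
    prec x y ∧ ((isP u ∧ isP (Rop i r s m t x y u)) ∨ (isVV u ∧ isVV (Rop i r s m t x y u))) := by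
  unfold Rop at h ⊢
  cases u <;> grind [prec, isP, isVV]

lemma Lop_inj {i m : Fin (k + 1)} {r s t : Bool} (h : Lop i r s m t x y u ≠ zero)
    (huv : Lop i r s m t x y u = Lop i r s m t x y v) : u = v := by
  unfold Lop at h huv
  cases u <;> cases v <;> grind

lemma Rop_inj {i m : Fin (k + 1)} {r s t : Bool} (h : Rop i r s m t x y u ≠ zero)
    (huv : Rop i r s m t x y u = Rop i r s m t x y v) : u = v := by
  unfold Rop at h huv
  cases u <;> cases v <;> grind

end BT

open BT

variable {T : TM k} {i : Fin (k + 1)} {r t b : Bool} {x y z u v : BT k}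

lemma fwd_eq_Lop_or_Rop (T : TM k) (i : Fin (k + 1)) (r t : Bool) :
    (∃ s m, T.instr i r = (s, Dir.L, m) ∧ fwd T i r t = Lop i r s m t) ∨
      ∃ s m, T.instr i r = (s, Dir.R, m) ∧ fwd T i r t = Rop i r s m t := by
  unfold fwd
  rcases T.instr i r with ⟨s, _ | _, m⟩
  exacts [Or.inl ⟨s, m, rfl, rfl⟩, Or.inr ⟨s, m, rfl, rfl⟩]

lemma fwd_ne_zero (h : fwd T i r t x y u ≠ zero) :
    prec x y ∧ ((isP u ∧ isP (fwd T i r t x y u)) ∨ (isVV u ∧ isVV (fwd T i r t x y u))) := by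
  rcases fwd_eq_Lop_or_Rop T i r t with ⟨s, m, -, hF⟩ | ⟨s, m, -, hF⟩ <;> rw [hF] at h ⊢
  exacts [Lop_ne_zero h, Rop_ne_zero h]

lemma fwd_inj (h : fwd T i r t x y u ≠ zero) (huv : fwd T i r t x y u = fwd T i r t x y v) :
    u = v := by
  rcases fwd_eq_Lop_or_Rop T i r t with ⟨s, m, -, hF⟩ | ⟨s, m, -, hF⟩ <;> rw [hF] at h huv
  exacts [Lop_inj h huv, Rop_inj h huv]

lemma apply_revOp {F : BT k → BT k → BT k → BT k} (h : revOp F x y u ≠ zero) :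
    u ≠ zero ∧ F x y (revOp F x y u) = u := by
  unfold revOp at h ⊢
  split_ifs at h ⊢ with hu
  exacts [⟨hu.1, hu.2.choose_spec⟩, absurd rfl h]

lemma revOp_fwd (h : fwd T i r t x y v = u) (hu : u ≠ zero) : revOp (fwd T i r t) x y u = v := by
  subst h
  have hex : fwd T i r t x y v ≠ zero ∧ ∃ w, fwd T i r t x y w = fwd T i r t x y v :=
    ⟨hu, v, rfl⟩
  rw [revOp, dif_pos hex]
  exact (fwd_inj hu hex.2.choose_spec.symm).symm

lemma mop_ne_zero (h : mop T i r t b x y u ≠ zero) :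
    prec x y ∧
      ((isP u ∧ isP (mop T i r t b x y u)) ∨ (isVV u ∧ isVV (mop T i r t b x y u))) := by
  cases b
  · exact fwd_ne_zero h
  · obtain ⟨hu, hv⟩ := apply_revOp h
    have := fwd_ne_zero (hv.symm ▸ hu)
    rw [hv] at this
    exact ⟨this.1, this.2.imp And.symm And.symm⟩

lemma isP_mop (h : mop T i r t b x y u ≠ zero) : isP (mop T i r t b x y u) = isP u := by
  rcases (mop_ne_zero h).2 with ⟨hu, hF⟩ | ⟨hu, hF⟩
  · rw [hu, hF]
  · rw [not_isP_of_isVV hu, not_isP_of_isVV hF]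

lemma U1op_ne_zero {F : BT k → BT k → BT k → BT k} (h : U1op F x y z u ≠ zero) :
    prec x y ∧ prec x z ∧ F x y u ≠ zero ∧ isP (U1op F x y z u) = isP (F x y u) := by
  unfold U1op at h ⊢
  grind [isP_barOp, ne_zero_of_isVV]

lemma U2op_ne_zero {F : BT k → BT k → BT k → BT k} (h : U2op F x y z u ≠ zero) :
    prec x z ∧ prec y z ∧ F y z u ≠ zero ∧ isP (U2op F x y z u) = isP (F y z u) := by
  unfold U2op at h ⊢
  grind [isP_barOp, ne_zero_of_isVV]

lemma U1op_mop_self : U1op (mop T i r t b) x y y u = mop T i r t b x y u := by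
  by_cases h : mop T i r t b x y u = zero
  · simp [U1op, h]
  · simp [U1op, (mop_ne_zero h).1]

lemma U2op_mop_self : U2op (mop T i r t b) x x y u = mop T i r t b x y u := by
  by_cases h : mop T i r t b x y u = zero
  · simp [U2op, h]
  · simp [U2op, (mop_ne_zero h).1]

end Algebra

section Operations

open BT

variable {k : ℕ} {T : TM k} {m n : ℕ}

/-- The basic operations of B(T), each as a function of a tuple of arguments, so that properties
common to all operations can be stated once. -/
inductive BasicOp (T : TM k) : {n : ℕ} → ((Fin n → BT k) → BT k) → Prop
  | zero : BasicOp T fun _ : Fin 0 → BT k => BT.zero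
  | t0 : BasicOp T fun v : Fin 1 → BT k => T0 (v 0)
  | t1 : BasicOp T fun v : Fin 2 → BT k => T1 (v 0) (v 1)
  | meet : BasicOp T fun v : Fin 2 → BT k => BT.meet (v 0) (v 1)
  | meetI (j : Fin 3) : BasicOp T fun v : Fin 2 → BT k => BT.meetI j (v 0) (v 1)
  | jop : BasicOp T fun v : Fin 3 → BT k => J' (v 0) (v 1) (v 2)
  | s1 : BasicOp T fun v : Fin 4 → BT k => S1 (v 0) (v 1) (v 2) (v 3)
  | s2 : BasicOp T fun v : Fin 5 → BT k => S2 (v 0) (v 1) (v 2) (v 3) (v 4)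
  | mach {i : Fin (k + 1)} (hi : i ≠ 0) (r t b : Bool) :
      BasicOp T fun v : Fin 3 → BT k => mop T i r t b (v 0) (v 1) (v 2)
  | u1 {i : Fin (k + 1)} (hi : i ≠ 0) (r t b : Bool) :
      BasicOp T fun v : Fin 4 → BT k => U1op (mop T i r t b) (v 0) (v 1) (v 2) (v 3)
  | u2 {i : Fin (k + 1)} (hi : i ≠ 0) (r t b : Bool) :
      BasicOp T fun v : Fin 4 → BT k => U2op (mop T i r t b) (v 0) (v 1) (v 2) (v 3)

lemma BasicOp.exists_isP_eq {F : (Fin n → BT k) → BT k} (hF : BasicOp T F) {v : Fin n → BT k}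
    (h : F v ≠ BT.zero) : ∃ i, isP (F v) = isP (v i) := by
  cases hF with
  | zero => exact absurd rfl h
  | t0 => exact ⟨0, (pEq_of_T0_ne_zero h).1.isP_eq⟩
  | t1 =>
    obtain ⟨hxy, hx⟩ := pEq_of_T1_ne_zero h
    exact ⟨0, (hxy.T1_left hx).isP_eq⟩
  | meet => exact ⟨0, (pEq_of_meet_ne_zero h).meet_left.isP_eq⟩
  | meetI => exact ⟨0, congrArg isP (eq_of_meetI_ne_zero h).1⟩
  | jop => exact ⟨0, isP_J' h⟩
  | s1 => exact ⟨1, (pEq_of_S1_ne_zero h).1.isP_eq⟩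
  | s2 => exact ⟨2, (pEq_of_S2_ne_zero h).1.isP_eq⟩
  | mach => exact ⟨2, isP_mop h⟩
  | u1 =>
    obtain ⟨-, -, hF, hP⟩ := U1op_ne_zero h
    exact ⟨3, hP.trans (isP_mop hF)⟩
  | u2 =>
    obtain ⟨-, -, hF, hP⟩ := U2op_ne_zero h
    exact ⟨3, hP.trans (isP_mop hF)⟩

lemma BasicOp.inK {F : (Fin n → BT k) → BT k} (hF : BasicOp T F) {v : Fin n → AA T m}
    (hv : ∀ i, InK T m (v i)) : InK T m fun y => F fun i => v i y := by
  cases hF with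
  | zero => exact .zeroOp
  | t0 => exact .t0 (hv _)
  | t1 => exact .t1 (hv _) (hv _)
  | meet => exact .meet (hv _) (hv _)
  | meetI j => exact .meetI j (hv _) (hv _)
  | jop => exact .jop (hv _) (hv _) (hv _)
  | s1 => exact .s1 (hv _) (hv _) (hv _) (hv _)
  | s2 => exact .s2 (hv _) (hv _) (hv _) (hv _) (hv _)
  | mach hi r t b => exact .mach _ hi r t b (hv _) (hv _) (hv _)
  | u1 hi r t b => exact .u1 _ hi r t b (hv _) (hv _) (hv _) (hv _)
  | u2 hi r t b => exact .u2 _ hi r t b (hv _) (hv _) (hv _) (hv _)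

lemma BasicOp.polyK {l : ℕ} {F : (Fin l → BT k) → BT k} (hF : BasicOp T F)
    {p : Fin l → (Fin n → AA T m) → AA T m} (hp : ∀ i, PolyK T m (p i)) :
    PolyK T m fun v y => F fun i => p i v y := by
  cases hF with
  | zero => exact .zeroOp
  | t0 => exact .t0 (hp _)
  | t1 => exact .t1 (hp _) (hp _)
  | meet => exact .meet (hp _) (hp _)
  | meetI j => exact .meetI j (hp _) (hp _)
  | jop => exact .jop (hp _) (hp _) (hp _)
  | s1 => exact .s1 (hp _) (hp _) (hp _) (hp _)
  | s2 => exact .s2 (hp _) (hp _) (hp _) (hp _) (hp _)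
  | mach hi r t b => exact .mach _ hi r t b (hp _) (hp _) (hp _)
  | u1 hi r t b => exact .u1 _ hi r t b (hp _) (hp _) (hp _) (hp _)
  | u2 hi r t b => exact .u2 _ hi r t b (hp _) (hp _) (hp _) (hp _)

@[elab_as_elim]
lemma InK.induction_on {p : AA T m → Prop} {f : AA T m} (hf : InK T m f)
    (gen_a : ∀ n ∈ Nset T m, p (aEl T m n)) (gen_q : ∀ j, p (qEl T m j))
    (op : ∀ {n} {F : (Fin n → BT k) → BT k}, BasicOp T F → ∀ v : Fin n → AA T m,
      (∀ i, InK T m (v i) ∧ p (v i)) → p fun y => F fun i => v i y) : p f := by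
  induction hf with
  | gen_a n hn => exact gen_a n hn
  | gen_q j => exact gen_q j
  | zeroOp => exact op .zero ![] (by simp)
  | @t0 f => exact op .t0 ![f] (by simp [*])
  | @t1 f g => exact op .t1 ![f, g] (by simp [Fin.forall_fin_succ, *])
  | @meet f g => exact op .meet ![f, g] (by simp [Fin.forall_fin_succ, *])
  | @meetI j f g => exact op (.meetI j) ![f, g] (by simp [Fin.forall_fin_succ, *])
  | @jop f g h => exact op .jop ![f, g, h] (by simp [Fin.forall_fin_succ, *])
  | @s1 f g h p => exact op .s1 ![f, g, h, p] (by simp [Fin.forall_fin_succ, *])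
  | @s2 f g h p q => exact op .s2 ![f, g, h, p, q] (by simp [Fin.forall_fin_succ, *])
  | @mach i hi r t b f g h =>
    exact op (.mach hi r t b) ![f, g, h] (by simp [Fin.forall_fin_succ, *])
  | @u1 i hi r t b f g h p =>
    exact op (.u1 hi r t b) ![f, g, h, p] (by simp [Fin.forall_fin_succ, *])
  | @u2 i hi r t b f g h p =>
    exact op (.u2 hi r t b) ![f, g, h, p] (by simp [Fin.forall_fin_succ, *])

@[elab_as_elim]
lemma PolyK.induction_on {C : ∀ {n}, ((Fin n → AA T m) → AA T m) → Prop}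
    {p : (Fin n → AA T m) → AA T m} (hp : PolyK T m p)
    (proj : ∀ {n} (i : Fin n), C fun v => v i)
    (const : ∀ {n} c, InK T m c → C fun _ : Fin n → AA T m => c)
    (op : ∀ {n l} {F : (Fin l → BT k) → BT k}, BasicOp T F →
      ∀ q : Fin l → (Fin n → AA T m) → AA T m, (∀ i, PolyK T m (q i) ∧ C (q i)) →
        C fun v y => F fun i => q i v y) : C p := by
  induction hp with
  | proj i => exact proj i
  | const c hc => exact const c hc
  | zeroOp => exact op .zero ![] (by simp)
  | @t0 n f => exact op .t0 ![f] (by simp [*])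
  | @t1 n f g => exact op .t1 ![f, g] (by simp [Fin.forall_fin_succ, *])
  | @meet n f g => exact op .meet ![f, g] (by simp [Fin.forall_fin_succ, *])
  | @meetI j n f g => exact op (.meetI j) ![f, g] (by simp [Fin.forall_fin_succ, *])
  | @jop n f g h => exact op .jop ![f, g, h] (by simp [Fin.forall_fin_succ, *])
  | @s1 n f g h p => exact op .s1 ![f, g, h, p] (by simp [Fin.forall_fin_succ, *])
  | @s2 n f g h p q => exact op .s2 ![f, g, h, p, q] (by simp [Fin.forall_fin_succ, *])
  | @mach i hi r t b n f g h =>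
    exact op (.mach hi r t b) ![f, g, h] (by simp [Fin.forall_fin_succ, *])
  | @u1 i hi r t b n f g h p =>
    exact op (.u1 hi r t b) ![f, g, h, p] (by simp [Fin.forall_fin_succ, *])
  | @u2 i hi r t b n f g h p =>
    exact op (.u2 hi r t b) ![f, g, h, p] (by simp [Fin.forall_fin_succ, *])

lemma PolyK.inK {p : (Fin n → AA T m) → AA T m} (hp : PolyK T m p) :
    ∀ v : Fin n → AA T m, (∀ i, InK T m (v i)) → InK T m (p v) :=
  hp.induction_on (fun i _ hv => hv i) (fun _ hc _ _ => hc)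
    fun hF _ hq v hv => hF.inK fun i => (hq i).2 v hv

lemma PolyK.congr_apply {p : (Fin n → AA T m) → AA T m} (hp : PolyK T m p)
    {y : Option {x : ℤ // x ∈ Nset T m}} :
    ∀ v w : Fin n → AA T m, (∀ i, v i y = w i y) → p v y = p w y :=
  hp.induction_on (fun i _ _ h => h i) (fun _ _ _ _ _ => rfl)
    fun _ _ hq v w h => congrArg _ (funext fun i => (hq i).2 v w h)

lemma PolyK.comp {l : ℕ} {p : (Fin n → AA T m) → AA T m} (hp : PolyK T m p) :
    ∀ σ : Fin n → (Fin l → AA T m) → AA T m, (∀ i, PolyK T m (σ i)) →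
      PolyK T m fun v => p fun i => σ i v :=
  hp.induction_on (fun i _ hσ => hσ i) (fun c hc _ _ => .const c hc)
    fun hF _ hq σ hσ => hF.polyK fun i => (hq i).2 σ hσ

lemma UPolyK.inK {F : AA T m → AA T m} (hF : UPolyK T m F) {f : AA T m} (hf : InK T m f) :
    InK T m (F f) :=
  PolyK.inK hF (fun _ => f) fun _ => hf

lemma UPolyK.comp {F G : AA T m → AA T m} (hG : UPolyK T m G) (hF : UPolyK T m F) :
    UPolyK T m fun f => G (F f) :=
  PolyK.comp hG (fun _ v => F (v 0)) fun _ => hF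

lemma BasicOp.uPolyK_update {F : (Fin n → BT k) → BT k} (hF : BasicOp T F) {u : Fin n → AA T m}
    (hu : ∀ i, InK T m (u i)) (a : Fin n) :
    UPolyK T m fun f y => F fun i => Function.update u a f i y := by
  refine hF.polyK fun i => ?_
  by_cases hi : i = a
  · subst hi
    simpa using PolyK.proj 0
  · simpa [hi] using PolyK.const _ (hu i)

/- The arguments are replaced one at a time, each replacement being a unary polynomial. -/
lemma BasicOp.rel_of_map_unary {R : AA T m → AA T m → Prop}
    (dom : ∀ {f g}, R f g → InK T m f ∧ InK T m g) (refl : ∀ {f}, InK T m f → R f f)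
    (trans : ∀ {f g h}, R f g → R g h → R f h)
    (map : ∀ {F f g}, UPolyK T m F → R f g → R (F f) (F g))
    {F : (Fin n → BT k) → BT k} (hF : BasicOp T F) (v w : Fin n → AA T m)
    (h : ∀ i, R (v i) (w i)) :
    R (fun y => F fun i => v i y) (fun y => F fun i => w i y) := by
  suffices ∀ s : Finset (Fin n),
      R (fun y => F fun i => v i y) (fun y => F fun i => s.piecewise w v i y) by
    simpa using this Finset.univ
  intro s
  induction s using Finset.induction_on with
  | empty => simpa using refl (hF.inK fun i => (dom (h i)).1)
  | insert a s ha ih =>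
    have hu : ∀ i, InK T m (s.piecewise w v i) := fun i => by
      by_cases hi : i ∈ s <;> simp [hi, dom (h i)]
    have hva : Function.update (s.piecewise w v) a (v a) = s.piecewise w v := by
      rw [← s.piecewise_eq_of_notMem w v ha, Function.update_eq_self]
    have hstep := map (hF.uPolyK_update hu a) (h a)
    rw [hva, ← s.piecewise_insert] at hstep
    exact trans ih hstep

lemma isCongK_of_basicOp {R : AA T m → AA T m → Prop}
    (dom : ∀ {f g}, R f g → InK T m f ∧ InK T m g) (refl : ∀ {f}, InK T m f → R f f)
    (symm : ∀ {f g}, R f g → R g f) (trans : ∀ {f g h}, R f g → R g h → R f h)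
    (op : ∀ {n} {F : (Fin n → BT k) → BT k}, BasicOp T F → ∀ v w : Fin n → AA T m,
      (∀ i, R (v i) (w i)) → R (fun y => F fun i => v i y) (fun y => F fun i => w i y)) :
    IsCongK T m R where
  refl _ := refl
  symm := symm
  trans := trans
  dom := dom
  t0 {f f'} _ := op .t0 ![f] ![f'] (by simp [*])
  t1 {f f' g g'} _ _ := op .t1 ![f, g] ![f', g'] (by simp [Fin.forall_fin_succ, *])
  meet {f f' g g'} _ _ := op .meet ![f, g] ![f', g'] (by simp [Fin.forall_fin_succ, *])
  meetI j {f f' g g'} _ _ := op (.meetI j) ![f, g] ![f', g'] (by simp [Fin.forall_fin_succ, *])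
  jop {f f' g g' h h'} _ _ _ := op .jop ![f, g, h] ![f', g', h'] (by simp [Fin.forall_fin_succ, *])
  s1 {f f' g g' h h' p p'} _ _ _ _ :=
    op .s1 ![f, g, h, p] ![f', g', h', p'] (by simp [Fin.forall_fin_succ, *])
  s2 {f f' g g' h h' p p' q q'} _ _ _ _ _ :=
    op .s2 ![f, g, h, p, q] ![f', g', h', p', q'] (by simp [Fin.forall_fin_succ, *])
  mach i hi r t b {f f' g g' h h'} _ _ _ :=
    op (.mach hi r t b) ![f, g, h] ![f', g', h'] (by simp [Fin.forall_fin_succ, *])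
  u1 i hi r t b {f f' g g' h h' p p'} _ _ _ _ :=
    op (.u1 hi r t b) ![f, g, h, p] ![f', g', h', p'] (by simp [Fin.forall_fin_succ, *])
  u2 i hi r t b {f f' g g' h h' p p'} _ _ _ _ :=
    op (.u2 hi r t b) ![f, g, h, p] ![f', g', h', p'] (by simp [Fin.forall_fin_succ, *])

end Operations

section Configurations

variable {k : ℕ} {T : TM k} {m : ℕ} {Q : Cfg k}

/-- The square to which the head moves from square `x`. -/
def Dir.move : Dir → ℤ → ℤ
  | L, x => x - 1
  | R, x => x + 1

lemma cfgStep_of_state_eq_zero (h : Q.state = 0) : cfgStep T Q = Q :=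
  if_pos h

lemma cfgStep_of_instr {s : Bool} {d : Dir} {i : Fin (k + 1)} (h : Q.state ≠ 0)
    (hI : T.instr Q.state (Q.tape Q.pos) = (s, d, i)) :
    cfgStep T Q = ⟨Function.update Q.tape Q.pos s, d.move Q.pos, i⟩ := by
  rw [cfgStep, if_neg h, hI]
  cases d <;> rfl

lemma cfgStep_eq_of_instr {i i' : Fin (k + 1)} {r s : Bool} {d : Dir} {p : ℤ} (hi : i ≠ 0)
    (hI : T.instr i r = (s, d, i')) (hstate : Q.state = i') (hpos : Q.pos = d.move p)
    (htape : Q.tape p = s) : cfgStep T ⟨Function.update Q.tape p r, p, i⟩ = Q := by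
  rw [cfgStep_of_instr hi (by simpa using hI)]
  rcases Q with ⟨t, q, j⟩
  subst hstate hpos htape
  simp

lemma cfgStep_pos (T : TM k) (Q : Cfg k) : |(cfgStep T Q).pos - Q.pos| ≤ 1 := by
  by_cases h : Q.state = 0
  · simp [cfgStep_of_state_eq_zero h]
  · rcases hI : T.instr Q.state (Q.tape Q.pos) with ⟨s, d, i⟩
    cases d <;> simp [cfgStep_of_instr h hI, Dir.move]

lemma cfgStep_tape_of_ne {x : ℤ} (hx : x ≠ Q.pos) : (cfgStep T Q).tape x = Q.tape x := by
  by_cases h : Q.state = 0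
  · rw [cfgStep_of_state_eq_zero h]
  · rw [cfgStep_of_instr h rfl]
    exact Function.update_of_ne hx _ _

lemma mem_Nset {x : ℤ} : x ∈ Nset T m ↔
    (∃ j ≤ m, ((cfgStep T)^[j] (Q0 k)).pos = x) ∨ x = -1 ∨ x = 0 ∨ x = 1 := by
  simp only [Nset, Finset.mem_union, Finset.mem_image, Finset.mem_range, Nat.lt_succ_iff,
    Finset.mem_insert, Finset.mem_singleton]

lemma zero_mem_Nset : (0 : ℤ) ∈ Nset T m :=
  mem_Nset.2 (by simp)

lemma mem_Nset_of_between {j : ℕ} (hj : j ≤ m) {x : ℤ}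
    (hx : (0 ≤ x ∧ x ≤ ((cfgStep T)^[j] (Q0 k)).pos) ∨
      (((cfgStep T)^[j] (Q0 k)).pos ≤ x ∧ x ≤ 0)) : x ∈ Nset T m := by
  induction j with
  | zero =>
    obtain rfl : x = 0 := by simp only [Function.iterate_zero_apply, Q0] at hx; omega
    exact zero_mem_Nset
  | succ j ih =>
    have hs := cfgStep_pos T ((cfgStep T)^[j] (Q0 k))
    rw [← Function.iterate_succ_apply' (cfgStep T), Nat.succ_eq_add_one, abs_le] at hs
    by_cases he : x = ((cfgStep T)^[j + 1] (Q0 k)).pos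
    · exact mem_Nset.2 (Or.inl ⟨j + 1, hj, he.symm⟩)
    · exact ih (by omega) (by omega)

lemma add_one_mem_Nset {n n' : ℤ} (hn : n ∈ Nset T m) (hn' : n' ∈ Nset T m) (h : n < n') :
    n + 1 ∈ Nset T m := by
  by_cases h0 : 0 ≤ n
  · rcases mem_Nset.1 hn' with ⟨j, hj, rfl⟩ | h1
    · exact mem_Nset_of_between hj (by omega)
    · exact mem_Nset.2 (by omega)
  · rcases mem_Nset.1 hn with ⟨j, hj, rfl⟩ | h1
    · exact mem_Nset_of_between hj (by omega)
    · exact mem_Nset.2 (by omega)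

lemma InCfgStar.pos_mem (h : InCfgStar T m Q) : Q.pos ∈ Nset T m := by
  obtain ⟨j, -, hj⟩ := h
  exact hj 0 (Nat.zero_le _)

lemma inCfgStar_Q0 : InCfgStar T m (Q0 k) :=
  ⟨m, rfl, fun l hl => mem_Nset.2 (Or.inl ⟨l, hl, rfl⟩)⟩

lemma InCfgStar.of_step (h : InCfgStar T m (cfgStep T Q)) (hQ : Q.pos ∈ Nset T m) :
    InCfgStar T m Q := by
  obtain ⟨j, hj, hp⟩ := h
  refine ⟨j + 1, hj, fun l hl => ?_⟩
  cases l with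
  | zero => exact hQ
  | succ l => exact hp l (by omega)

/-- `T`, started in `Q0`, has halted after `m` steps. -/
abbrev HaltsAt (T : TM k) (m : ℕ) : Prop := ((cfgStep T)^[m] (Q0 k)).state = 0

lemma InCfgStar.step (hm : HaltsAt T m) (h : InCfgStar T m Q) : InCfgStar T m (cfgStep T Q) := by
  by_cases h0 : Q.state = 0
  · rwa [cfgStep_of_state_eq_zero h0]
  · obtain ⟨j, hj, hp⟩ := h
    cases j with
    | zero => exact absurd ((congrArg Cfg.state hj).trans hm) h0
    | succ j => exact ⟨j, hj, fun l hl => hp (l + 1) (by omega)⟩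

lemma InCfgStar.iterate (hm : HaltsAt T m) (h : InCfgStar T m Q) (l : ℕ) :
    InCfgStar T m ((cfgStep T)^[l] Q) := by
  induction l with
  | zero => exact h
  | succ l ih => exact Function.iterate_succ_apply' (cfgStep T) l Q ▸ ih.step hm

/- Every `Q ∈ Cfg⋆` shares its halting configuration with `Q0`, so a property that is invariant
under single steps travels from `Q0` down to that configuration and back up to `Q`. -/
@[elab_as_elim]
lemma InCfgStar.induction {p : Cfg k → Prop} (hQ : InCfgStar T m Q) (hm : HaltsAt T m)
    (h0 : p (Q0 k))
    (hstep : ∀ Q, InCfgStar T m Q → Q.state ≠ 0 → (p Q ↔ p (cfgStep T Q))) : p Q := by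
  have hiter : ∀ Q, InCfgStar T m Q → ∀ l, p Q ↔ p ((cfgStep T)^[l] Q) := by
    intro Q hQ l
    induction l with
    | zero => rfl
    | succ l ih =>
      rw [ih, Function.iterate_succ_apply']
      by_cases hs : ((cfgStep T)^[l] Q).state = 0
      · rw [cfgStep_of_state_eq_zero hs]
      · exact hstep _ (hQ.iterate hm l) hs
  obtain ⟨j, hj, -⟩ := id hQ
  rw [hiter Q hQ j, hj, ← hiter _ inCfgStar_Q0 m]
  exact h0

lemma InCfgStar.tape_eq_false (hm : HaltsAt T m) (h : InCfgStar T m Q) {x : ℤ}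
    (hx : x ∉ Nset T m) : Q.tape x = false := by
  refine h.induction hm rfl fun Q hQ _ => ?_
  rw [cfgStep_tape_of_ne (ne_of_mem_of_not_mem hQ.pos_mem hx).symm]

/-- The configuration `Q` translated by `n` squares. -/
def Cfg.shift (n : ℤ) (Q : Cfg k) : Cfg k := ⟨fun x => Q.tape (x - n), Q.pos + n, Q.state⟩

lemma semiconj_shift_cfgStep (T : TM k) (n : ℤ) :
    Function.Semiconj (Cfg.shift n) (cfgStep T) (cfgStep T) := by
  intro Q
  by_cases h : Q.state = 0
  · rw [cfgStep_of_state_eq_zero h, cfgStep_of_state_eq_zero (Q := Q.shift n) h]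
  · rcases hI : T.instr Q.state (Q.tape Q.pos) with ⟨s, d, i⟩
    rw [cfgStep_of_instr h hI, cfgStep_of_instr (Q := Q.shift n) h (by simpa [Cfg.shift] using hI)]
    simp only [Cfg.shift, Cfg.mk.injEq, and_true]
    constructor
    · funext x
      simp only [Function.update_apply, sub_eq_iff_eq_add]
    · cases d <;> simp only [Dir.move] <;> omega

/- Translating `Q0` by `n` translates its halting configuration by `n`. -/
lemma eq_zero_of_inCfgStar_shift (hm : HaltsAt T m) {n : ℤ}
    (h : InCfgStar T m ((Q0 k).shift n)) : n = 0 := by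
  obtain ⟨j, hj, -⟩ := h
  have hfix (l : ℕ) : (cfgStep T)^[l] ((cfgStep T)^[m] (Q0 k)) = (cfgStep T)^[m] (Q0 k) :=
    Function.iterate_fixed (cfgStep_of_state_eq_zero hm) l
  have hshift : ((cfgStep T)^[m] (Q0 k)).shift n = (cfgStep T)^[m] (Q0 k) := calc
    _ = ((cfgStep T)^[j + m] (Q0 k)).shift n := by rw [Function.iterate_add_apply, hfix]
    _ = (cfgStep T)^[m + j] ((Q0 k).shift n) := by
      rw [(semiconj_shift_cfgStep T n).iterate_right, add_comm]
    _ = (cfgStep T)^[m] (Q0 k) := by rw [Function.iterate_add_apply, hj, hfix]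
  simpa [Cfg.shift] using congrArg Cfg.pos hshift

end Configurations

section Encoding

open BT

variable {k : ℕ} {T : TM k} {m : ℕ} {i : Fin (k + 1)} {r s t b : Bool} {j j' : Fin 3} {n n' : ℤ}
  {Q Q' : Cfg k} {x : {x : ℤ // x ∈ Nset T m}}

lemma isU_aEl (n : ℤ) (x : {x : ℤ // x ∈ Nset T m}) : isU (aEl T m n (some x)) := by
  simp only [aEl]
  split_ifs <;> rfl

lemma aEl_self (hn : n ∈ Nset T m) : aEl T m n (some ⟨n, hn⟩) = BT.H := by
  simp [aEl]

lemma aEl_of_lt (hn' : n' ∈ Nset T m) (h : n' < n) : aEl T m n (some ⟨n', hn'⟩) = BT.one :=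
  if_pos h

lemma aEl_of_gt (hn' : n' ∈ Nset T m) (h : n < n') : aEl T m n (some ⟨n', hn'⟩) = BT.two := by
  simp [aEl, h.not_gt, h.ne']

lemma eq_of_aEl_eq (hn : n ∈ Nset T m)
    (h : ∀ x, aEl T m n (some x) = aEl T m n' (some x)) : n = n' := by
  have hx := h ⟨n, hn⟩
  rcases lt_trichotomy n n' with hlt | heq | hgt
  · simp [aEl_self, aEl_of_lt hn hlt] at hx
  · exact heq
  · simp [aEl_self, aEl_of_gt hn hgt] at hx

lemma eq_add_one_of_prec_aEl (hn : n ∈ Nset T m) (hn' : n' ∈ Nset T m)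
    (h : ∀ x, prec (aEl T m n (some x)) (aEl T m n' (some x))) : n' = n + 1 := by
  have hlt : n < n' := by
    by_contra hlt
    have hx := h ⟨n, hn⟩
    rcases (not_lt.1 hlt).lt_or_eq with hgt | rfl
    · simp [aEl_self, aEl_of_gt hn hgt, prec] at hx
    · simp [aEl_self, prec] at hx
  by_contra hne
  have hmem := add_one_mem_Nset hn hn' hlt
  have hx := h ⟨n + 1, hmem⟩
  simp [aEl_of_gt hmem (lt_add_one n), aEl_of_lt hmem (show n + 1 < n' by omega), prec] at hx

lemma qEl_eq_betaEl (j : Fin 3) : qEl T m j = betaEl T m j (Q0 k) := by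
  funext y
  cases y <;> rfl

lemma isVV_betaEl (j : Fin 3) (Q : Cfg k) (x : {x : ℤ // x ∈ Nset T m}) :
    isVV (betaEl T m j Q (some x)) := by
  simp only [betaEl]
  split_ifs <;> rfl

lemma betaEl_ne_zero (j : Fin 3) (Q : Cfg k) (y : Option {x : ℤ // x ∈ Nset T m}) :
    betaEl T m j Q y ≠ BT.zero := by
  cases y with
  | none => simp [betaEl]
  | some x => exact ne_zero_of_isVV (isVV_betaEl j Q x)

lemma betaEl_ne_barOp : betaEl T m j Q (some x) ≠ barOp (betaEl T m j' Q' (some x)) := by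
  simp only [betaEl]
  split_ifs <;> simp [barOp]

lemma betaEl_eq_C_iff : betaEl T m j Q (some x) = C b i r s ↔
    x.1 < Q.pos ∧ b = false ∧ Q.state = i ∧ Q.tape Q.pos = r ∧ Q.tape x = s := by
  simp only [betaEl]
  grind

lemma betaEl_eq_M_iff : betaEl T m j Q (some x) = M b i r ↔
    x.1 = Q.pos ∧ b = false ∧ Q.state = i ∧ Q.tape Q.pos = r := by
  simp only [betaEl]
  grind

lemma betaEl_eq_D_iff : betaEl T m j Q (some x) = D b i r s ↔
    Q.pos < x.1 ∧ b = false ∧ Q.state = i ∧ Q.tape Q.pos = r ∧ Q.tape x = s := by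
  simp only [betaEl]
  grind

lemma tape_eq_of_betaEl_eq (h : betaEl T m j Q (some x) = betaEl T m j' Q' (some x)) :
    Q.tape x = Q'.tape x := by
  simp only [betaEl] at h
  grind

lemma InCfgStar.eq_of_betaEl_eq (hm : HaltsAt T m) (hQ : InCfgStar T m Q)
    (hQ' : InCfgStar T m Q')
    (h : ∀ x, betaEl T m j Q (some x) = betaEl T m j' Q' (some x)) : Q = Q' := by
  have hM : betaEl T m j' Q' (some ⟨Q.pos, hQ.pos_mem⟩) = M false Q.state (Q.tape Q.pos) :=
    h _ ▸ betaEl_eq_M_iff.2 ⟨rfl, rfl, rfl, rfl⟩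
  obtain ⟨hpos, -, hstate, -⟩ := betaEl_eq_M_iff.1 hM
  have htape : Q.tape = Q'.tape := by
    funext x
    by_cases hx : x ∈ Nset T m
    · exact tape_eq_of_betaEl_eq (h ⟨x, hx⟩)
    · rw [hQ.tape_eq_false hm hx, hQ'.tape_eq_false hm hx]
  rcases Q with ⟨tape, pos, state⟩
  rcases Q' with ⟨tape', pos', state'⟩
  simp_all

/-- The left one of the two squares between which the head moves from `Q`. -/
def leftPos (T : TM k) (Q : Cfg k) : ℤ := min Q.pos (cfgStep T Q).pos

/-- The step from `Q` to `cfgStep T Q` is the one performed by the operation `L_{irt}` or `R_{irt}`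
at the arguments `a_n`, `a_{n+1}`. -/
def IsStepAt (T : TM k) (i : Fin (k + 1)) (r t : Bool) (n : ℤ) (Q : Cfg k) : Prop :=
  Q.state = i ∧ Q.tape Q.pos = r ∧ (cfgStep T Q).tape (cfgStep T Q).pos = t ∧ leftPos T Q = n

lemma IsStepAt.of_instr {d : Dir} {i' : Fin (k + 1)} {p : ℤ} (hi : i ≠ 0)
    (hI : T.instr i r = (s, d, i')) (hp : Q.pos = p) (hstate : Q.state = i)
    (hr : Q.tape p = r) (ht : Q.tape (d.move p) = t) : IsStepAt T i r t (min p (d.move p)) Q := by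
  subst hp hstate hr ht
  have hstep := cfgStep_of_instr hi hI
  refine ⟨rfl, rfl, ?_, by rw [leftPos, hstep]⟩
  rw [hstep]
  exact Function.update_of_ne (by cases d <;> simp [Dir.move]) _ _

lemma IsStepAt.fwd_betaEl (h : IsStepAt T i r t n Q) (hi : i ≠ 0) (j : Fin 3)
    (y : Option {x : ℤ // x ∈ Nset T m}) :
    fwd T i r t (aEl T m n y) (aEl T m (n + 1) y) (betaEl T m j Q y) =
      betaEl T m j (cfgStep T Q) y := by
  obtain ⟨rfl, rfl, rfl, rfl⟩ := h
  rcases hI : T.instr Q.state (Q.tape Q.pos) with ⟨s, d, i'⟩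
  rw [fwd, leftPos, cfgStep_of_instr hi hI, hI]
  cases d <;> rcases y with _ | ⟨x, hx⟩ <;> simp only [Dir.move]
  · simp [aEl, betaEl, Lop]
  · rcases (by omega : x < Q.pos - 1 ∨ x = Q.pos - 1 ∨ x = Q.pos ∨ Q.pos < x) with
      h | rfl | rfl | h
    · have : x < Q.pos := by omega
      simp [aEl, betaEl, Lop, h, this, this.ne]
    · simp [aEl, betaEl, Lop]
    · have : Q.pos - 1 < Q.pos := sub_one_lt _
      simp [aEl, betaEl, Lop, this.not_gt, this.ne']
    · have : Q.pos - 1 < x := by omega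
      simp [aEl, betaEl, Lop, h.not_gt, h.ne', this.not_gt, this.ne']
  · simp [aEl, betaEl, Rop]
  · rcases (by omega : x < Q.pos ∨ x = Q.pos ∨ x = Q.pos + 1 ∨ Q.pos + 1 < x) with
      h | rfl | rfl | h
    · have : x < Q.pos + 1 := by omega
      simp [aEl, betaEl, Rop, h, this, h.ne]
    · simp [aEl, betaEl, Rop]
    · simp [aEl, betaEl, Rop]
    · have : Q.pos < x := by omega
      simp [aEl, betaEl, Rop, h.not_gt, h.ne', this.not_gt, this.ne']

lemma IsStepAt.revOp_betaEl (h : IsStepAt T i r t n Q) (hi : i ≠ 0) (j : Fin 3)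
    (y : Option {x : ℤ // x ∈ Nset T m}) :
    revOp (fwd T i r t) (aEl T m n y) (aEl T m (n + 1) y) (betaEl T m j (cfgStep T Q) y) =
      betaEl T m j Q y :=
  revOp_fwd (h.fwd_betaEl hi j y) (betaEl_ne_zero _ _ _)

/- `(H, 1)` and `(2, H)` are the values of `(a_n, a_{n+1})` at `n` and at `n + 1`. -/
lemma fwd_window {u v u' v' : BT k} (h : fwd T i r t BT.H one u = v) (hv : v ≠ BT.zero)
    (h' : fwd T i r t two BT.H u' = v') (hv' : v' ≠ BT.zero) :
    ∃ s i' b b', (T.instr i r = (s, Dir.L, i') ∧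
        u = C b i r t ∧ v = M b i' t ∧ u' = M b' i r ∧ v' = D b' i' t s) ∨
      (T.instr i r = (s, Dir.R, i') ∧
        u = M b i r ∧ v = C b i' t s ∧ u' = D b' i r t ∧ v' = M b' i' t) := by
  rcases fwd_eq_Lop_or_Rop T i r t with ⟨s, i', hI, hF⟩ | ⟨s, i', hI, hF⟩ <;> rw [hF] at h h'
  · have hu : ∃ b, u = C b i r t ∧ v = M b i' t := by
      cases u <;> simp only [Lop] at h <;> grind
    have hu' : ∃ b, u' = M b i r ∧ v' = D b i' t s := by
      cases u' <;> simp only [Lop] at h' <;> grind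
    grind
  · have hu : ∃ b, u = M b i r ∧ v = C b i' t s := by
      cases u <;> simp only [Rop] at h <;> grind
    have hu' : ∃ b, u' = D b i r t ∧ v' = M b i' t := by
      cases u' <;> simp only [Rop] at h' <;> grind
    grind

lemma isStepAt_of_fwd_ne_zero (hi : i ≠ 0) (hn : n ∈ Nset T m) (hn' : n + 1 ∈ Nset T m)
    (h : ∀ x, fwd T i r t (aEl T m n (some x)) (aEl T m (n + 1) (some x))
      (betaEl T m j Q (some x)) ≠ BT.zero) : IsStepAt T i r t n Q := by
  have h0 := h ⟨n, hn⟩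
  have h1 := h ⟨n + 1, hn'⟩
  rw [aEl_self, aEl_of_lt hn (lt_add_one n)] at h0
  rw [aEl_self, aEl_of_gt hn' (lt_add_one n)] at h1
  obtain ⟨s, i', b, b', ⟨hI, hu, -, hu', -⟩ | ⟨hI, hu, -, hu', -⟩⟩ := fwd_window rfl h0 rfl h1
  · obtain ⟨-, -, -, -, ht⟩ := betaEl_eq_C_iff.1 hu
    obtain ⟨hp, -, hstate, hr⟩ := betaEl_eq_M_iff.1 hu'
    simpa [Dir.move] using IsStepAt.of_instr (p := n + 1) hi hI hp.symm hstate
      ((congrArg Q.tape hp).trans hr) (by simpa [Dir.move] using ht)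
  · obtain ⟨hp, -, hstate, hr⟩ := betaEl_eq_M_iff.1 hu
    obtain ⟨-, -, -, -, ht⟩ := betaEl_eq_D_iff.1 hu'
    simpa [Dir.move] using IsStepAt.of_instr (p := n) hi hI hp.symm hstate
      ((congrArg Q.tape hp).trans hr) ht

lemma exists_isStepAt_of_revOp_ne_zero (hi : i ≠ 0) (hn : n ∈ Nset T m) (hn' : n + 1 ∈ Nset T m)
    (h : ∀ x, revOp (fwd T i r t) (aEl T m n (some x)) (aEl T m (n + 1) (some x))
      (betaEl T m j Q (some x)) ≠ BT.zero) :
    ∃ Q', cfgStep T Q' = Q ∧ Q'.pos ∈ Nset T m ∧ IsStepAt T i r t n Q' := by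
  suffices hpred : ∃ s d i' p, T.instr i r = (s, d, i') ∧ Q.state = i' ∧ Q.pos = d.move p ∧
      Q.tape p = s ∧ Q.tape Q.pos = t ∧ p ∈ Nset T m ∧ min p (d.move p) = n by
    obtain ⟨s, d, i', p, hI, hstate, hpos, hs, ht, hp, rfl⟩ := hpred
    have hstep := cfgStep_eq_of_instr hi hI hstate hpos hs
    refine ⟨_, hstep, hp, rfl, by simp, by rwa [hstep], ?_⟩
    rw [leftPos, hstep, hpos]
  obtain ⟨hv, h0⟩ := apply_revOp (h ⟨n, hn⟩)
  obtain ⟨hv', h1⟩ := apply_revOp (h ⟨n + 1, hn'⟩)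
  rw [aEl_self, aEl_of_lt hn (lt_add_one n)] at h0
  rw [aEl_self, aEl_of_gt hn' (lt_add_one n)] at h1
  obtain ⟨s, i', b, b', ⟨hI, -, hu, -, hu'⟩ | ⟨hI, -, hu, -, hu'⟩⟩ := fwd_window h0 hv h1 hv'
  · obtain ⟨hp, -, hstate, ht⟩ := betaEl_eq_M_iff.1 hu
    obtain ⟨-, -, -, -, hs⟩ := betaEl_eq_D_iff.1 hu'
    exact ⟨s, _, i', n + 1, hI, hstate, by simpa [Dir.move] using hp.symm, hs, ht, hn',
      by simp [Dir.move]⟩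
  · obtain ⟨-, -, -, -, hs⟩ := betaEl_eq_C_iff.1 hu
    obtain ⟨hp, -, hstate, ht⟩ := betaEl_eq_M_iff.1 hu'
    exact ⟨s, _, i', n, hI, hstate, hp.symm, hs, ht, hn, by simp [Dir.move]⟩

end Encoding

section Regular

open BT

variable {k : ℕ} {T : TM k} {m : ℕ} {f g u : AA T m} {x : {x : ℤ // x ∈ Nset T m}}

/-- `f` vanishes at no square of `N`; for `f ∈ K` this says that `f ∉ K₀`. -/
def Nonvanishing (f : AA T m) : Prop := ∀ x, f (some x) ≠ BT.zero

/-- Membership in `S ∪ Λ`. -/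
def Regular (f : AA T m) : Prop := f ∈ Sset T m ∨ f ∈ Lam T m

/-- The invariant of `K` that yields `K = K₀ ∪ S ∪ Λ`. -/
structure Tame (f : AA T m) : Prop where
  isP_eq_false : ∀ x, isP (f (some x)) = false
  regular : Nonvanishing f → Regular f

/-- `f` and `g` encode the same configuration of `Cfg⋆`. -/
def SameBlock (f g : AA T m) : Prop :=
  ∃ Q, InCfgStar T m Q ∧ (∃ j, f = betaEl T m j Q) ∧ ∃ j, g = betaEl T m j Q

lemma regular_aEl {n : ℤ} (hn : n ∈ Nset T m) : Regular (aEl T m n) :=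
  Or.inl ⟨n, hn, rfl⟩

lemma regular_betaEl {Q : Cfg k} (hQ : InCfgStar T m Q) (j : Fin 3) :
    Regular (betaEl T m j Q) :=
  Or.inr ⟨j, Q, hQ, rfl⟩

lemma nonvanishing_aEl (n : ℤ) : Nonvanishing (aEl T m n) :=
  fun x => ne_zero_of_isU (isU_aEl n x)

lemma nonvanishing_qEl (j : Fin 3) : Nonvanishing (qEl T m j) := by
  rw [qEl_eq_betaEl]
  exact fun _ => betaEl_ne_zero _ _ _

lemma Regular.isP_eq_false (hf : Regular f) (x : {x : ℤ // x ∈ Nset T m}) :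
    isP (f (some x)) = false := by
  rcases hf with ⟨n, -, rfl⟩ | ⟨j, Q, -, rfl⟩
  · simp only [aEl]
    split_ifs <;> rfl
  · exact not_isP_of_isVV (isVV_betaEl j Q x)

lemma Regular.mem_Sset (hf : Regular f) (h : isU (f (some x))) : f ∈ Sset T m := by
  refine hf.resolve_right ?_
  rintro ⟨j, Q, -, rfl⟩
  exact not_isU_of_isVV (isVV_betaEl j Q x) h

lemma Regular.mem_Lam (hf : Regular f) (h : isVV (f (some x))) : f ∈ Lam T m := by
  refine hf.resolve_left ?_
  rintro ⟨n, -, rfl⟩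
  exact not_isU_of_isVV h (isU_aEl n x)

lemma Regular.isP_none (hf : Regular f) (h : isVV (f (some x))) : isP (f none) := by
  obtain ⟨j, Q, -, rfl⟩ := hf.mem_Lam h
  rfl

lemma Regular.eq_or_sameBlock (hm : HaltsAt T m) (hf : Regular f) (hg : Regular g)
    (h : ∀ x, f (some x) = g (some x)) : f = g ∨ SameBlock f g := by
  rcases hf with ⟨n, hn, rfl⟩ | ⟨j, Q, hQ, rfl⟩
  · obtain ⟨n', -, rfl⟩ := hg.mem_Sset (h ⟨n, hn⟩ ▸ isU_aEl n _)
    exact Or.inl (congrArg _ (eq_of_aEl_eq hn h))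
  · obtain ⟨j', Q', hQ', rfl⟩ := hg.mem_Lam (h ⟨0, zero_mem_Nset⟩ ▸ isVV_betaEl j Q _)
    obtain rfl := hQ.eq_of_betaEl_eq hm hQ' h
    exact Or.inr ⟨Q, hQ, ⟨j, rfl⟩, j', rfl⟩

lemma Regular.of_pEq (hf : Regular f) (h : ∀ y, PEq (u y) (f y)) : Regular u := by
  have hN : ∀ x, u (some x) = f (some x) := fun x =>
    ((h _).symm.eq_of_isP_eq_false (hf.isP_eq_false x)).symm
  rcases hf with ⟨n, hn, rfl⟩ | ⟨j, Q, hQ, rfl⟩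
  · convert regular_aEl hn
    funext y
    rcases y with _ | x
    exacts [((h none).symm.eq_of_isP_eq_false rfl).symm, hN x]
  · obtain ⟨l, hl⟩ := exists_eq_P_of_isP ((h none).isP_eq.trans rfl : isP (u none) = true)
    convert regular_betaEl hQ l
    funext y
    rcases y with _ | x
    exacts [hl, hN x]

lemma Tame.pEq (hm : HaltsAt T m) (hf : Tame f) (hg : Tame g) (hf0 : Nonvanishing f)
    (h : ∀ x, PEq (f (some x)) (g (some x))) : Nonvanishing g ∧ ∀ y, PEq (f y) (g y) := by
  have hg0 : Nonvanishing g := fun x => (h x).ne_zero (hf0 x)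
  refine ⟨hg0, fun y => ?_⟩
  rcases (hf.regular hf0).eq_or_sameBlock hm (hg.regular hg0)
    fun x => (h x).eq_of_isP_eq_false (hf.isP_eq_false x) with rfl | ⟨Q, -, ⟨j, rfl⟩, j', rfl⟩
  · exact Or.inl rfl
  · cases y with
    | none => exact Or.inr ⟨rfl, rfl⟩
    | some x => exact h x

/- Only unbarred elements occur in the members of `Λ`. -/
lemma Tame.not_eq_barOp (hf : Tame f) (hg : Tame g) (hf0 : Nonvanishing f) (hg0 : Nonvanishing g)
    (hx : isVV (g (some x))) : f (some x) ≠ barOp (g (some x)) := by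
  intro h
  obtain ⟨j, Q, -, rfl⟩ := (hf.regular hf0).mem_Lam (x := x) (by rwa [h, isVV_barOp])
  obtain ⟨j', Q', -, rfl⟩ := (hg.regular hg0).mem_Lam hx
  exact betaEl_ne_barOp h

lemma Tame.exists_aEl_of_prec (hf : Tame f) (hg : Tame g)
    (h : ∀ x, prec (f (some x)) (g (some x))) :
    ∃ n ∈ Nset T m, n + 1 ∈ Nset T m ∧ f = aEl T m n ∧ g = aEl T m (n + 1) := by
  have hU x := isU_of_prec (h x)
  obtain ⟨n, hn, rfl⟩ := (hf.regular fun x => ne_zero_of_isU (hU x).1).mem_Sset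
    (hU ⟨0, zero_mem_Nset⟩).1
  obtain ⟨n', hn', rfl⟩ := (hg.regular fun x => ne_zero_of_isU (hU x).2).mem_Sset
    (hU ⟨0, zero_mem_Nset⟩).2
  obtain rfl := eq_add_one_of_prec_aEl hn hn' h
  exact ⟨n, hn, hn', rfl, rfl⟩

lemma InCfgStar.eq_Q0 (hm : HaltsAt T m) {Q : Cfg k} (hQ : InCfgStar T m Q) {j : Fin 3}
    (h : ∀ x, isV10 (betaEl T m j Q (some x))) : Q = Q0 k := by
  have hcell (x : {x : ℤ // x ∈ Nset T m}) : Q.state = 1 ∧ Q.tape x.1 = false := by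
    have hx := h x
    simp only [isV10, Bool.or_eq_true, beq_iff_eq, betaEl_eq_C_iff, betaEl_eq_M_iff,
      betaEl_eq_D_iff] at hx
    rcases hx with (⟨-, -, hs, -, hx⟩ | ⟨hx, -, hs, ht⟩) | ⟨-, -, hs, -, hx⟩
    exacts [⟨hs, hx⟩, ⟨hs, hx ▸ ht⟩, ⟨hs, hx⟩]
  have htape : Q.tape = fun _ => false := by
    funext x
    by_cases hx : x ∈ Nset T m
    exacts [(hcell ⟨x, hx⟩).2, hQ.tape_eq_false hm hx]
  have hshift : Q = (Q0 k).shift Q.pos := by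
    have hstate : Q.state = 1 := (hcell ⟨0, zero_mem_Nset⟩).1
    rcases Q with ⟨tape, p, i⟩
    simp_all [Cfg.shift, Q0]
  have hpos : Q.pos = 0 := eq_zero_of_inCfgStar_shift hm (hshift ▸ hQ)
  rw [hshift, hpos]
  simp [Cfg.shift, Q0]

end Regular

section Strictness

open BT

variable {k : ℕ} {T : TM k} {m n : ℕ} {f g h p : AA T m} {i : Fin (k + 1)} {r t b : Bool}

lemma Tame.T0_strict (hf : Tame f) (h : Nonvanishing fun y => T0 (f y)) :
    Nonvanishing f ∧ Regular fun y => T0 (f y) := by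
  have hpe x := pEq_of_T0_ne_zero (h x)
  have hf0 : Nonvanishing f := fun x => (hpe x).1.ne_zero (h x)
  refine ⟨hf0, (hf.regular hf0).of_pEq fun y => ?_⟩
  rcases y with _ | x
  · have hP : isP (f none) := (hf.regular hf0).isP_none (x := ⟨0, zero_mem_Nset⟩)
      ((hpe _).2.resolve_left (by simp [hf.isP_eq_false]))
    exact Or.inr ⟨isP_T0 hP, hP⟩
  · exact (hpe x).1

lemma Tame.T1_strict (hm : HaltsAt T m) (hf : Tame f) (hg : Tame g)
    (h : Nonvanishing fun y => T1 (f y) (g y)) :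
    Nonvanishing f ∧ Nonvanishing g ∧ Regular fun y => T1 (f y) (g y) := by
  have hpe x := pEq_of_T1_ne_zero (h x)
  have hV x : isV10 (f (some x)) := (hpe x).2.resolve_left (by simp [hf.isP_eq_false])
  have hf0 : Nonvanishing f := fun x => ne_zero_of_isVV (isVV_of_isV10 (hV x))
  obtain ⟨hg0, hfg⟩ := hf.pEq hm hg hf0 fun x => (hpe x).1
  refine ⟨hf0, hg0, (hf.regular hf0).of_pEq fun y => (hfg y).T1_left ?_⟩
  rcases y with _ | x
  · exact Or.inl ((hf.regular hf0).isP_none (isVV_of_isV10 (hV ⟨0, zero_mem_Nset⟩)))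
  · exact Or.inr (hV x)

lemma Tame.meet_strict (hm : HaltsAt T m) (hf : Tame f) (hg : Tame g)
    (h : Nonvanishing fun y => BT.meet (f y) (g y)) :
    Nonvanishing f ∧ Nonvanishing g ∧ Regular fun y => BT.meet (f y) (g y) := by
  have hpe x := pEq_of_meet_ne_zero (h x)
  have hf0 : Nonvanishing f := fun x => (hpe x).meet_left.ne_zero (h x)
  obtain ⟨hg0, hfg⟩ := hf.pEq hm hg hf0 hpe
  exact ⟨hf0, hg0, (hf.regular hf0).of_pEq fun y => (hfg y).meet_left⟩

/- A member of `Λ` with values in `V₁₀⁰` encodes `Q₀`, hence takes the excluded value `s_i` at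
one of the squares `-1, 0, 1`. -/
lemma Tame.not_nonvanishing_meetI (hm : HaltsAt T m) (hf : Tame f) (l : Fin 3) :
    ¬ Nonvanishing fun y => meetI l (f y) (g y) := by
  intro h
  have hne x := eq_of_meetI_ne_zero (h x)
  have hV x : isV10 (f (some x)) := (hne x).2.1.resolve_left (by simp [hf.isP_eq_false])
  have hreg := hf.regular fun x => ne_zero_of_isVV (isVV_of_isV10 (hV x))
  obtain ⟨j, Q, hQ, rfl⟩ := hreg.mem_Lam (isVV_of_isV10 (hV ⟨0, zero_mem_Nset⟩))
  obtain rfl := hQ.eq_Q0 hm hV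
  fin_cases l
  · exact (hne ⟨-1, mem_Nset.2 (by simp)⟩).2.2 rfl
  · exact (hne ⟨0, zero_mem_Nset⟩).2.2 rfl
  · exact (hne ⟨1, mem_Nset.2 (by simp)⟩).2.2 rfl

lemma Tame.J'_strict (hm : HaltsAt T m) (hf : Tame f) (hg : Tame g) (hh : Tame h)
    (hne : Nonvanishing fun y => J' (f y) (g y) (h y)) :
    Nonvanishing f ∧ Nonvanishing g ∧ Nonvanishing h ∧
      Regular fun y => J' (f y) (g y) (h y) := by
  have hJ x := pEq_or_eq_barOp_of_J'_ne_zero (hne x)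
  have hf0 : Nonvanishing f := fun x => ne_zero_of_J'_ne_zero (hne x)
  have hg0 : Nonvanishing g := fun x => by
    rcases hJ x with ⟨hfg, -⟩ | ⟨hg, -⟩
    exacts [hfg.ne_zero (hf0 x), ne_zero_of_isVV hg]
  have hpe x := (hJ x).resolve_right fun hb => hf.not_eq_barOp hg hf0 hg0 hb.1 hb.2
  obtain ⟨-, hfg⟩ := hf.pEq hm hg hf0 fun x => (hpe x).1
  obtain ⟨hh0, hfh⟩ := hf.pEq hm hh hf0 fun x => (hpe x).2
  refine ⟨hf0, hg0, hh0, (hf.regular hf0).of_pEq fun y => ?_⟩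
  rw [(hfg y).J'_eq_meet]
  exact (hfh y).meet_left

/- The value `H`, which every member of `S` takes, is not allowed as first argument of `S₁`. -/
lemma Tame.not_nonvanishing_S1 (hf : Tame f) (hg : Tame g) :
    ¬ Nonvanishing fun y => S1 (f y) (g y) (h y) (p y) := by
  intro hne
  have hf12 x : f (some x) = one ∨ f (some x) = two := by
    simpa [hg.isP_eq_false] using (pEq_of_S1_ne_zero (hne x)).2
  have hU x : isU (f (some x)) := by
    rcases hf12 x with hx | hx <;> rw [hx] <;> rfl
  obtain ⟨n, hn, rfl⟩ :=
    (hf.regular fun x => ne_zero_of_isU (hU x)).mem_Sset (hU ⟨0, zero_mem_Nset⟩)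
  simpa [aEl_self] using hf12 ⟨n, hn⟩

lemma Tame.not_nonvanishing_S2 {q : AA T m} (hf : Tame f) (hg : Tame g) (hh : Tame h) :
    ¬ Nonvanishing fun y => S2 (f y) (g y) (h y) (p y) (q y) := by
  intro hne
  have hbar x : isVV (g (some x)) ∧ f (some x) = barOp (g (some x)) :=
    (pEq_of_S2_ne_zero (hne x)).2.resolve_right (by simp [hh.isP_eq_false])
  refine hf.not_eq_barOp hg (fun x => ?_) (fun x => ne_zero_of_isVV (hbar x).1)
    (hbar ⟨0, zero_mem_Nset⟩).1 (hbar _).2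
  exact ne_zero_of_isVV (by rw [(hbar x).2, isVV_barOp, (hbar x).1])

lemma Tame.mop_strict (hm : HaltsAt T m) (hf : Tame f) (hg : Tame g) (hh : Tame h) (hi : i ≠ 0)
    (hne : Nonvanishing fun y => mop T i r t b (f y) (g y) (h y)) :
    Nonvanishing f ∧ Nonvanishing g ∧ Nonvanishing h ∧
      Regular fun y => mop T i r t b (f y) (g y) (h y) := by
  have hV x : isVV (h (some x)) :=
    ((mop_ne_zero (hne x)).2.resolve_left (by simp [hh.isP_eq_false])).1
  have hh0 : Nonvanishing h := fun x => ne_zero_of_isVV (hV x)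
  obtain ⟨n, hn, hn', rfl, rfl⟩ := hf.exists_aEl_of_prec hg fun x => (mop_ne_zero (hne x)).1
  obtain ⟨j, Q, hQ, rfl⟩ := (hh.regular hh0).mem_Lam (hV ⟨0, zero_mem_Nset⟩)
  refine ⟨nonvanishing_aEl _, nonvanishing_aEl _, hh0, ?_⟩
  cases b with
  | false =>
    have hstep := isStepAt_of_fwd_ne_zero hi hn hn' hne
    convert regular_betaEl (hQ.step hm) j
    exact hstep.fwd_betaEl hi j _
  | true =>
    obtain ⟨Q', rfl, hpos, hstep⟩ := exists_isStepAt_of_revOp_ne_zero hi hn hn' hne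
    convert regular_betaEl (hQ.of_step hpos) j
    exact hstep.revOp_betaEl hi j _

lemma Tame.U1op_strict (hm : HaltsAt T m) (hf : Tame f) (hg : Tame g) (hh : Tame h) (hp : Tame p)
    (hi : i ≠ 0) (hne : Nonvanishing fun y => U1op (mop T i r t b) (f y) (g y) (h y) (p y)) :
    Nonvanishing f ∧ Nonvanishing g ∧ Nonvanishing h ∧ Nonvanishing p ∧
      Regular fun y => U1op (mop T i r t b) (f y) (g y) (h y) (p y) := by
  have hU x := U1op_ne_zero (hne x)
  obtain ⟨n, hn, -, rfl, rfl⟩ := hf.exists_aEl_of_prec hg fun x => (hU x).1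
  obtain ⟨n', -, -, hn', rfl⟩ := hf.exists_aEl_of_prec hh fun x => (hU x).2.1
  obtain rfl : n = n' := eq_of_aEl_eq hn fun x => congrFun hn' _
  simp only [U1op_mop_self] at hne ⊢
  obtain ⟨hf0, hg0, hp0, hreg⟩ := hf.mop_strict hm hg hp hi hne
  exact ⟨hf0, hg0, hg0, hp0, hreg⟩

lemma Tame.U2op_strict (hm : HaltsAt T m) (hf : Tame f) (hg : Tame g) (hh : Tame h) (hp : Tame p)
    (hi : i ≠ 0) (hne : Nonvanishing fun y => U2op (mop T i r t b) (f y) (g y) (h y) (p y)) :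
    Nonvanishing f ∧ Nonvanishing g ∧ Nonvanishing h ∧ Nonvanishing p ∧
      Regular fun y => U2op (mop T i r t b) (f y) (g y) (h y) (p y) := by
  have hU x := U2op_ne_zero (hne x)
  obtain ⟨n, -, hn, rfl, rfl⟩ := hf.exists_aEl_of_prec hh fun x => (hU x).1
  obtain ⟨n', -, -, rfl, hn'⟩ := hg.exists_aEl_of_prec hh fun x => (hU x).2.1
  obtain rfl : n = n' :=
    add_right_cancel (eq_of_aEl_eq hn fun x => congrFun hn' _)
  simp only [U2op_mop_self] at hne ⊢
  obtain ⟨hf0, hh0, hp0, hreg⟩ := hf.mop_strict hm hh hp hi hne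
  exact ⟨hf0, hf0, hh0, hp0, hreg⟩

lemma BasicOp.strict (hm : HaltsAt T m) {F : (Fin n → BT k) → BT k} (hF : BasicOp T F)
    {v : Fin n → AA T m} (hv : ∀ i, Tame (v i)) (h : Nonvanishing fun y => F fun i => v i y) :
    (∀ i, Nonvanishing (v i)) ∧ Regular fun y => F fun i => v i y := by
  cases hF with
  | zero => exact absurd rfl (h ⟨0, zero_mem_Nset⟩)
  | t0 => simpa [Fin.forall_fin_succ] using (hv 0).T0_strict h
  | t1 => simpa [Fin.forall_fin_succ, and_assoc] using (hv 0).T1_strict hm (hv 1) h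
  | meet => simpa [Fin.forall_fin_succ, and_assoc] using (hv 0).meet_strict hm (hv 1) h
  | meetI l => exact absurd h ((hv 0).not_nonvanishing_meetI hm l)
  | jop => simpa [Fin.forall_fin_succ, and_assoc] using (hv 0).J'_strict hm (hv 1) (hv 2) h
  | s1 => exact absurd h ((hv 0).not_nonvanishing_S1 (hv 1))
  | s2 => exact absurd h ((hv 0).not_nonvanishing_S2 (hv 1) (hv 2))
  | mach hi =>
    simpa [Fin.forall_fin_succ, and_assoc] using (hv 0).mop_strict hm (hv 1) (hv 2) hi h
  | u1 hi =>
    simpa [Fin.forall_fin_succ, and_assoc] using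
      (hv 0).U1op_strict hm (hv 1) (hv 2) (hv 3) hi h
  | u2 hi =>
    simpa [Fin.forall_fin_succ, and_assoc] using
      (hv 0).U2op_strict hm (hv 1) (hv 2) (hv 3) hi h

lemma Regular.tame (hf : Regular f) : Tame f :=
  ⟨hf.isP_eq_false, fun _ => hf⟩

lemma InK.tame (hm : HaltsAt T m) (hf : InK T m f) : Tame f := by
  refine hf.induction_on (fun n hn => (regular_aEl hn).tame) (fun j => ?_) fun hF v hv =>
    ⟨fun x => ?_, fun h => (hF.strict hm (fun i => (hv i).2) h).2⟩
  · exact qEl_eq_betaEl (T := T) j ▸ (regular_betaEl inCfgStar_Q0 j).tame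
  · by_contra hx
    obtain ⟨i, hi⟩ := hF.exists_isP_eq (ne_zero_of_isP (eq_true_of_ne_false hx))
    exact hx (hi.trans ((hv i).2.isP_eq_false x))

end Strictness

section Theta

open BT

variable {k : ℕ} {T : TM k} {m n : ℕ} {f g h : AA T m} {Q : Cfg k} {j : Fin 3}

/- All basic operations are strict, so arguments outside `S ∪ Λ` can influence a value in `S ∪ Λ`
only through subterms on which the polynomial is constant. -/
lemma PolyK.eq_of_nonvanishing (hm : HaltsAt T m) {p : (Fin n → AA T m) → AA T m}
    (hp : PolyK T m p) : ∀ v, (∀ i, InK T m (v i)) → (∀ i, ¬ Nonvanishing (v i)) →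
      Nonvanishing (p v) → ∀ w, p w = p v :=
  hp.induction_on (fun i _ _ hv0 h => absurd h (hv0 i)) (fun _ _ _ _ _ _ _ => rfl)
    fun {_ _ F} hF q hq v hv hv0 h w => by
      have hq0 := (hF.strict hm (fun i => ((hq i).1.inK v hv).tame hm) h).1
      have heq i : q i w = q i v := (hq i).2 v hv hv0 (hq0 i) w
      simp only [heq]

lemma theta.symm (hfg : theta T m f g) : theta T m g f :=
  ⟨hfg.2.1, hfg.1, fun F hF => (hfg.2.2 F hF).symm⟩

lemma theta.trans (hfg : theta T m f g) (hgh : theta T m g h) : theta T m f h :=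
  ⟨hfg.1, hgh.2.1, fun F hF => (hfg.2.2 F hF).trans (hgh.2.2 F hF)⟩

lemma theta.map {F : AA T m → AA T m} (hF : UPolyK T m F) (hfg : theta T m f g) :
    theta T m (F f) (F g) :=
  ⟨hF.inK hfg.1, hF.inK hfg.2.1, fun _ hG => hfg.2.2 _ (hG.comp hF)⟩

lemma theta_of_not_nonvanishing (hm : HaltsAt T m) (hf : InK T m f) (hg : InK T m g)
    (hf0 : ¬ Nonvanishing f) (hg0 : ¬ Nonvanishing g) : theta T m f g := by
  have hF_eq {f g : AA T m} (hf : InK T m f) (hf0 : ¬ Nonvanishing f) (F : AA T m → AA T m)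
      (hF : UPolyK T m F) (h : F f = qEl T m 2) : F g = qEl T m 2 := by
    refine (PolyK.eq_of_nonvanishing hm hF (fun _ => f) (fun _ => hf) (fun _ => hf0) ?_
      fun _ => g).trans h
    exact h ▸ nonvanishing_qEl 2
  exact ⟨hf, hg, fun F hF => ⟨hF_eq hf hf0 F hF, hF_eq hg hg0 F hF⟩⟩

lemma InCfgStar.leftPos_mem (hm : HaltsAt T m) (hQ : InCfgStar T m Q) :
    leftPos T Q ∈ Nset T m := by
  rcases min_choice Q.pos (cfgStep T Q).pos with h | h <;> rw [leftPos, h]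
  exacts [hQ.pos_mem, (hQ.step hm).pos_mem]

lemma leftPos_add_one (hs : Q.state ≠ 0) : leftPos T Q + 1 = max Q.pos (cfgStep T Q).pos := by
  rw [leftPos, cfgStep_of_instr hs rfl]
  cases (T.instr Q.state (Q.tape Q.pos)).2.1 <;> simp [Dir.move]

lemma InCfgStar.leftPos_add_one_mem (hm : HaltsAt T m) (hQ : InCfgStar T m Q)
    (hs : Q.state ≠ 0) : leftPos T Q + 1 ∈ Nset T m := by
  rw [leftPos_add_one hs]
  rcases max_choice Q.pos (cfgStep T Q).pos with h | h <;> rw [h]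
  exacts [hQ.pos_mem, (hQ.step hm).pos_mem]

/-- The unary polynomial of `K` that simulates the step of `T` from `Q`: with `b = false` it sends
`β^j(Q)` to `β^j(cfgStep T Q)`, with `b = true` it sends `β^j(cfgStep T Q)` back to `β^j(Q)`. -/
noncomputable def stepPoly (T : TM k) (m : ℕ) (Q : Cfg k) (b : Bool) (f : AA T m) : AA T m :=
  fun y => mop T Q.state (Q.tape Q.pos) ((cfgStep T Q).tape (cfgStep T Q).pos) b
    (aEl T m (leftPos T Q) y) (aEl T m (leftPos T Q + 1) y) (f y)

lemma InCfgStar.uPolyK_stepPoly (hm : HaltsAt T m) (hQ : InCfgStar T m Q) (hs : Q.state ≠ 0)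
    (b : Bool) : UPolyK T m (stepPoly T m Q b) :=
  PolyK.mach Q.state hs _ _ b (.const _ (.gen_a _ (hQ.leftPos_mem hm)))
    (.const _ (.gen_a _ (hQ.leftPos_add_one_mem hm hs))) (.proj 0)

lemma IsCongK.map_stepPoly {R : AA T m → AA T m → Prop} (hR : IsCongK T m R) (hm : HaltsAt T m)
    (hQ : InCfgStar T m Q) (hs : Q.state ≠ 0) (b : Bool) (hfg : R f g) :
    R (stepPoly T m Q b f) (stepPoly T m Q b g) :=
  hR.mach Q.state hs _ _ b (hR.refl _ (.gen_a _ (hQ.leftPos_mem hm)))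
    (hR.refl _ (.gen_a _ (hQ.leftPos_add_one_mem hm hs))) hfg

lemma stepPoly_false_eq_betaEl_iff (hs : Q.state ≠ 0) :
    stepPoly T m Q false f = betaEl T m j (cfgStep T Q) ↔ f = betaEl T m j Q := by
  have hstep : IsStepAt T _ _ _ _ Q := ⟨rfl, rfl, rfl, rfl⟩
  constructor
  · intro hf
    funext y
    have hy := congrFun hf y
    exact fwd_inj (hy.trans_ne (betaEl_ne_zero _ _ _)) (hy.trans (hstep.fwd_betaEl hs j y).symm)
  · rintro rfl
    exact funext (hstep.fwd_betaEl hs j)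

lemma stepPoly_true_eq_betaEl_iff (hs : Q.state ≠ 0) :
    stepPoly T m Q true f = betaEl T m j Q ↔ f = betaEl T m j (cfgStep T Q) := by
  have hstep : IsStepAt T _ _ _ _ Q := ⟨rfl, rfl, rfl, rfl⟩
  constructor
  · intro hf
    funext y
    have hy := congrFun hf y
    have hf_eq := (apply_revOp (hy.trans_ne (betaEl_ne_zero _ _ _))).2
    exact hf_eq.symm.trans ((congrArg _ hy).trans (hstep.fwd_betaEl hs j y))
  · rintro rfl
    exact funext (hstep.revOp_betaEl hs j)

lemma T1_qEl_self {l : Fin 3} (h : T1 (P j : BT k) (P j) = P l) :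
    (fun y => T1 (qEl T m j y) (qEl T m j y)) = qEl T m l := by
  funext y
  rcases y with _ | x
  · exact h
  · simp only [qEl]
    split_ifs <;> simp [T1, isV10]

lemma IsCongK.rel_betaEl (hm : HaltsAt T m) {R : AA T m → AA T m → Prop} (hR : IsCongK T m R)
    (h02 : R (qEl T m 0) (qEl T m 2)) (hQ : InCfgStar T m Q) :
    ∀ j j', R (betaEl T m j Q) (betaEl T m j' Q) := by
  refine hQ.induction hm ?_ fun Q hQ hs => ⟨fun h j j' => ?_, fun h j j' => ?_⟩
  · have h12 : R (qEl T m 1) (qEl T m 2) := by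
      have h := hR.t1 h02 h02
      rwa [T1_qEl_self (l := 1) (by simp [T1]), T1_qEl_self (l := 2) (by simp [T1])] at h
    have hq2 (j) : R (betaEl T m j (Q0 k)) (qEl T m 2) := by
      rw [← qEl_eq_betaEl]
      fin_cases j
      exacts [h02, h12, hR.refl _ (.gen_q 2)]
    exact fun j j' => hR.trans (hq2 j) (hR.symm (hq2 j'))
  · rw [← (stepPoly_false_eq_betaEl_iff hs).2 rfl, ← (stepPoly_false_eq_betaEl_iff hs).2 rfl]
    exact hR.map_stepPoly hm hQ hs false (h j j')
  · rw [← (stepPoly_true_eq_betaEl_iff hs).2 rfl, ← (stepPoly_true_eq_betaEl_iff hs).2 rfl]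
    exact hR.map_stepPoly hm hQ hs true (h j j')

lemma theta.exists_eq_qEl (hm : HaltsAt T m) (h : theta T m f (qEl T m j)) :
    ∃ j', f = qEl T m j' := by
  have hqq : (fun y => BT.meet (qEl T m j y) (qEl T m 2 y)) = qEl T m 2 := by
    funext y
    rcases y with _ | x
    · fin_cases j <;> simp [qEl, BT.meet]
    · simp [qEl, BT.meet]
  have hfq : (fun y => BT.meet (f y) (qEl T m 2 y)) = qEl T m 2 :=
    (h.2.2 (fun f y => BT.meet (f y) (qEl T m 2 y))
      (.meet (.proj 0) (.const _ (.gen_q 2)))).2 hqq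
  have hq0 : Nonvanishing (qEl T m 2) := nonvanishing_qEl 2
  have hne x : BT.meet (f (some x)) (qEl T m 2 (some x)) ≠ BT.zero :=
    (congrFun hfq (some x)).trans_ne (hq0 x)
  have hf := h.1.tame hm
  have hq := (InK.gen_q (T := T) (m := m) 2).tame hm
  have hf0 : Nonvanishing f := (hf.meet_strict hm hq hne).1
  rcases (hf.regular hf0).eq_or_sameBlock hm (hq.regular hq0) fun x =>
    (pEq_of_meet_ne_zero (hne x)).eq_of_isP_eq_false (hf.isP_eq_false x) with
    rfl | ⟨Q, hQ, ⟨j', rfl⟩, l, hl⟩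
  · exact ⟨2, rfl⟩
  · rw [qEl_eq_betaEl] at hl
    obtain rfl := inCfgStar_Q0.eq_of_betaEl_eq hm hQ fun x => congrFun hl _
    exact ⟨j', (qEl_eq_betaEl j').symm⟩

lemma theta.exists_eq_betaEl (hm : HaltsAt T m) (hQ : InCfgStar T m Q) :
    ∀ ⦃f j⦄, theta T m f (betaEl T m j Q) → ∃ j', f = betaEl T m j' Q := by
  refine hQ.induction hm ?_ fun Q hQ hs => ⟨?_, ?_⟩
  · intro f j h
    simp only [← qEl_eq_betaEl] at h ⊢
    exact h.exists_eq_qEl hm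
  · intro ih f j h
    have hmap := h.map (hQ.uPolyK_stepPoly hm hs true)
    rw [(stepPoly_true_eq_betaEl_iff hs).2 rfl] at hmap
    exact (ih hmap).imp fun _ => (stepPoly_true_eq_betaEl_iff hs).1
  · intro ih f j h
    have hmap := h.map (hQ.uPolyK_stepPoly hm hs false)
    rw [(stepPoly_false_eq_betaEl_iff hs).2 rfl] at hmap
    exact (ih hmap).imp fun _ => (stepPoly_false_eq_betaEl_iff hs).1

/-- The explicit description of `θ̄`: two elements of `K` are related if they are `θ`-related or
encode the same configuration of `Cfg⋆`. -/
def BlockRel (T : TM k) (m : ℕ) (f g : AA T m) : Prop :=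
  InK T m f ∧ InK T m g ∧ (theta T m f g ∨ SameBlock f g)

lemma BlockRel.refl (hf : InK T m f) : BlockRel T m f f :=
  ⟨hf, hf, Or.inl ⟨hf, hf, fun _ _ => Iff.rfl⟩⟩

lemma BlockRel.symm (hfg : BlockRel T m f g) : BlockRel T m g f :=
  ⟨hfg.2.1, hfg.1, hfg.2.2.imp theta.symm fun ⟨Q, hQ, hf, hg⟩ => ⟨Q, hQ, hg, hf⟩⟩

lemma BlockRel.trans (hm : HaltsAt T m) (hfg : BlockRel T m f g) (hgh : BlockRel T m g h) :
    BlockRel T m f h := by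
  obtain ⟨hf, -, hfg⟩ := hfg
  obtain ⟨-, hh, hgh⟩ := hgh
  refine ⟨hf, hh, ?_⟩
  rcases hfg with hfg | ⟨Q, hQ, hf, j, rfl⟩
  · rcases hgh with hgh | ⟨Q, hQ, ⟨j, rfl⟩, hh⟩
    · exact Or.inl (hfg.trans hgh)
    · exact Or.inr ⟨Q, hQ, hfg.exists_eq_betaEl hm hQ, hh⟩
  · rcases hgh with hgh | ⟨Q', hQ', ⟨j', hjj'⟩, hh⟩
    · exact Or.inr ⟨Q, hQ, hf, hgh.symm.exists_eq_betaEl hm hQ⟩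
    · obtain rfl := hQ.eq_of_betaEl_eq hm hQ' fun x => congrFun hjj' _
      exact Or.inr ⟨Q, hQ, hf, hh⟩

lemma BlockRel.map (hm : HaltsAt T m) {F : AA T m → AA T m} (hF : UPolyK T m F)
    (hfg : BlockRel T m f g) : BlockRel T m (F f) (F g) := by
  obtain ⟨hf, hg, h⟩ := hfg
  have hFf := hF.inK hf
  have hFg := hF.inK hg
  refine ⟨hFf, hFg, ?_⟩
  rcases h with h | ⟨Q, -, ⟨j, rfl⟩, j', rfl⟩
  · exact Or.inl (h.map hF)
  · have heq x : F (betaEl T m j Q) (some x) = F (betaEl T m j' Q) (some x) :=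
      PolyK.congr_apply hF (fun _ => betaEl T m j Q) (fun _ => betaEl T m j' Q) fun _ => rfl
    have hiff : Nonvanishing (F (betaEl T m j Q)) ↔ Nonvanishing (F (betaEl T m j' Q)) :=
      forall_congr' fun x => by rw [heq]
    by_cases h0 : Nonvanishing (F (betaEl T m j Q))
    · rcases ((hFf.tame hm).regular h0).eq_or_sameBlock hm
        ((hFg.tame hm).regular (hiff.1 h0)) heq with hFF | hblock
      · exact Or.inl (hFF ▸ ⟨hFf, hFf, fun _ _ => Iff.rfl⟩)
      · exact Or.inr hblock
    · exact Or.inl (theta_of_not_nonvanishing hm hFf hFg h0 (hiff.not.1 h0))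

lemma isCongK_blockRel (hm : HaltsAt T m) : IsCongK T m (BlockRel T m) :=
  have dom {f g : AA T m} (h : BlockRel T m f g) : InK T m f ∧ InK T m g := ⟨h.1, h.2.1⟩
  isCongK_of_basicOp dom .refl .symm (.trans hm) fun hF =>
    hF.rel_of_map_unary dom .refl (.trans hm) (.map hm)

end Theta

/-- Lemma 4.3(2): (f,g) ∈ θ̄ iff (f,g) ∈ θ or
{f,g} ⊆ {β⁰(Q),β¹(Q),β²(Q)} for some Q ∈ Cfg⋆. -/
theorem statement18 {k : ℕ} (hk : 0 < k) (T : TM k) (m : ℕ)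
    (hm : ((cfgStep T)^[m] (Q0 k)).state = 0) :
    ∀ f g : AA T m, InK T m f → InK T m g →
      (thetaBar T m f g ↔ theta T m f g ∨
        ∃ Q : Cfg k, InCfgStar T m Q ∧
          (∃ j : Fin 3, f = betaEl T m j Q) ∧ (∃ j : Fin 3, g = betaEl T m j Q)) := by
  intro f g hf hg
  constructor
  · intro h
    exact (h.2.2 (BlockRel T m) (isCongK_blockRel hm) (fun a b hab => ⟨hab.1, hab.2.1, Or.inl hab⟩)
      ⟨.gen_q 0, .gen_q 2, Or.inr ⟨Q0 k, inCfgStar_Q0, ⟨0, qEl_eq_betaEl 0⟩,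
        2, qEl_eq_betaEl 2⟩⟩).2.2
  · rintro (h | ⟨Q, hQ, ⟨j, rfl⟩, j', rfl⟩)
    · exact ⟨hf, hg, fun R _ hθ _ => hθ f g h⟩
    · exact ⟨hf, hg, fun R hR _ h02 => hR.rel_betaEl hm h02 hQ j j'⟩

end Paper
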